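/- arXiv:1106.5573 — 4 statements merged into one kernel-verified Lean document; each statement's English description precedes it below -/
import Mathlib

section
/- Let b ≥ 3. The period domain D is nonempty and path-connected in the subspace topology inherited from ℙ(ℂ^b). -/
noncomputable section

open scoped BigOperators

def eps {b : ℕ} (i : Fin b) : ℝ := if (i : ℕ) < 3 then 1 else -1

def bR {b : ℕ} (v w : Fin b → ℝ) : ℝ := ∑ i, eps i * v i * w i

def qR {b : ℕ} (v : Fin b → ℝ) : ℝ := bR v v

def bC {b : ℕ} (z w : Fin b → ℂ) : ℂ := ∑ i, (eps i : ℂ) * z i * w i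

def qC {b : ℕ} (z : Fin b → ℂ) : ℂ := bC z z

def conjVec {b : ℕ} (z : Fin b → ℂ) : Fin b → ℂ := fun i => (starRingEnd ℂ) (z i)

def rePart {b : ℕ} (z : Fin b → ℂ) : Fin b → ℝ := fun i => (z i).re
def imPart {b : ℕ} (z : Fin b → ℂ) : Fin b → ℝ := fun i => (z i).im

def cplx {b : ℕ} (v : Fin b → ℝ) : Fin b → ℂ := fun i => (v i : ℂ)

def isPeriodVec {b : ℕ} (z : Fin b → ℂ) : Prop :=
  qC z = 0 ∧ 0 < (bC z (conjVec z)).re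

instance projectivizationTopology (K V : Type*) [DivisionRing K] [AddCommGroup V] [Module K V]
    [TopologicalSpace V] : TopologicalSpace (Projectivization K V) :=
  inferInstanceAs (TopologicalSpace (Quotient (projectivizationSetoid K V)))

def periodDomain (b : ℕ) : Set (Projectivization ℂ (Fin b → ℂ)) :=
  {x | ∃ (z : Fin b → ℂ) (hz : z ≠ 0), Projectivization.mk ℂ z hz = x ∧ isPeriodVec z}

def Pspan {b : ℕ} (z : Fin b → ℂ) : Submodule ℝ (Fin b → ℝ) :=
  Submodule.span ℝ {rePart z, imPart z}

def PosDefOn {b : ℕ} (W : Submodule ℝ (Fin b → ℝ)) : Prop :=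
  ∀ v ∈ W, v ≠ 0 → 0 < qR v

def twistorLine {b : ℕ} (W : Submodule ℝ (Fin b → ℝ)) :
    Set (Projectivization ℂ (Fin b → ℂ)) :=
  {x | ∃ (z : Fin b → ℂ) (hz : z ≠ 0), Projectivization.mk ℂ z hz = x ∧ isPeriodVec z ∧
    rePart z ∈ W ∧ imPart z ∈ W}

/-- `W^⊥ ∩ Λ = {0}`: the twistor line / three-space `W` is generic w.r.t. `Λ`. -/
def IsGenericW {b : ℕ} (Λ : AddSubgroup (Fin b → ℝ)) (W : Submodule ℝ (Fin b → ℝ)) : Prop :=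
  ∀ α ∈ Λ, (∀ w ∈ W, bR α w = 0) → α = 0

def bRlin {b : ℕ} (p : Fin b → ℝ) : (Fin b → ℝ) →ₗ[ℝ] ℝ where
  toFun v := bR v p
  map_add' x y := by
    unfold bR
    rw [← Finset.sum_add_distrib]
    exact Finset.sum_congr rfl fun i _ => by simp [Pi.add_apply]; ring
  map_smul' c x := by
    show bR (c • x) p = (RingHom.id ℝ) c • bR x p
    unfold bR
    rw [RingHom.id_apply, smul_eq_mul, Finset.mul_sum]
    exact Finset.sum_congr rfl fun i _ => by simp [Pi.smul_apply]; ring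

def perpSubmodule {b : ℕ} (P : Submodule ℝ (Fin b → ℝ)) : Submodule ℝ (Fin b → ℝ) :=
  ⨅ p ∈ P, LinearMap.ker (bRlin p)

/-- Linearly independent pairs in `ℝ³`. -/
def indepPairs : Set ((Fin 3 → ℝ) × (Fin 3 → ℝ)) :=
  {p | ∀ s t : ℝ, s • p.1 + t • p.2 = 0 → s = 0 ∧ t = 0}

/-- Pairs spanning a positive definite plane. -/
def posPairs (b : ℕ) : Set ((Fin b → ℝ) × (Fin b → ℝ)) :=
  {p | ∀ s t : ℝ, (s ≠ 0 ∨ t ≠ 0) → 0 < qR (s • p.1 + t • p.2)}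

lemma indep_swap {u v : Fin 3 → ℝ} (h : (u, v) ∈ indepPairs) : (v, u) ∈ indepPairs := by
  intro s t hst
  have := h t s (by rw [add_comm]; exact hst)
  exact ⟨this.2, this.1⟩

lemma indep_iff {u v : Fin 3 → ℝ} (hu : u ≠ 0) :
    (u, v) ∈ indepPairs ↔ v ∈ ((Submodule.span ℝ {u} : Submodule ℝ (Fin 3 → ℝ)) : Set (Fin 3 → ℝ))ᶜ := by
  simp only [indepPairs, Set.mem_ofPred_eq, Set.mem_compl_iff, SetLike.mem_coe,
    Submodule.mem_span_singleton]
  constructor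
  · rintro h ⟨a, rfl⟩
    have := h a (-1) (by simp)
    simp at this
  · intro h s t hst
    have ht : t = 0 := by
      by_contra ht
      apply h
      refine ⟨-(t⁻¹ * s), ?_⟩
      have : t • v = -(s • u) := by
        rw [eq_neg_iff_add_eq_zero, add_comm]; exact hst
      calc (-(t⁻¹ * s)) • u = t⁻¹ • (-(s • u)) := by
            rw [smul_neg, smul_smul, neg_smul]
        _ = v := by rw [← this, smul_smul, inv_mul_cancel₀ ht, one_smul]
    subst ht
    simp only [zero_smul, add_zero, smul_eq_zero] at hst
    exact ⟨hst.resolve_right hu, rfl⟩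

lemma indep_ne {u v : Fin 3 → ℝ} (h : (u, v) ∈ indepPairs) : u ≠ 0 := by
  rintro rfl
  have := h 1 0 (by simp)
  simp at this

lemma compl_line {u : Fin 3 → ℝ} :
    IsPathConnected (((Submodule.span ℝ {u} : Submodule ℝ (Fin 3 → ℝ)) : Set (Fin 3 → ℝ))ᶜ) := by
  apply isPathConnected_compl_of_one_lt_codim
  have h1 := Submodule.finrank_quotient_add_finrank (Submodule.span ℝ {u})
  have h2 : Module.finrank ℝ (Submodule.span ℝ {u}) ≤ 1 := by
    simpa using finrank_span_le_card (R := ℝ) ({u} : Set (Fin 3 → ℝ))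
  rw [Module.finrank_fin_fun] at h1
  rw [← Module.finrank_eq_rank]
  have : 1 < Module.finrank ℝ ((Fin 3 → ℝ) ⧸ Submodule.span ℝ {u}) := by omega
  exact_mod_cast this

lemma join_snd {u v w : Fin 3 → ℝ} (h : (u, v) ∈ indepPairs) (h' : (u, w) ∈ indepPairs) :
    JoinedIn indepPairs (u, v) (u, w) := by
  have hu := indep_ne h
  have := (compl_line (u := u)).joinedIn v ((indep_iff hu).1 h) w ((indep_iff hu).1 h')
  refine (this.map (f := fun x => (u, x)) (by fun_prop)).mono ?_
  rintro _ ⟨x, hx, rfl⟩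
  exact (indep_iff hu).2 hx

lemma join_fst {u v w : Fin 3 → ℝ} (h : (v, u) ∈ indepPairs) (h' : (w, u) ∈ indepPairs) :
    JoinedIn indepPairs (v, u) (w, u) := by
  refine ((join_snd (indep_swap h) (indep_swap h')).map (f := Prod.swap) (by fun_prop)).mono ?_
  rintro _ ⟨⟨x, y⟩, hx, rfl⟩
  exact indep_swap hx

lemma base_indep : ((![1,0,0] : Fin 3 → ℝ), (![0,1,0] : Fin 3 → ℝ)) ∈ indepPairs := by
  intro s t h
  have h0 := congrFun h 0
  have h1 := congrFun h 1
  simp at h0 h1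
  exact ⟨h0, h1⟩

lemma base_indep' : ((![1,0,0] : Fin 3 → ℝ), (![0,0,1] : Fin 3 → ℝ)) ∈ indepPairs := by
  intro s t h
  have h0 := congrFun h 0
  have h1 := congrFun h 2
  simp at h0 h1
  exact ⟨h0, h1⟩

lemma exists_aux {u : Fin 3 → ℝ} (hu : u ≠ 0) :
    ∃ v, (u, v) ∈ indepPairs ∧ ((![1,0,0] : Fin 3 → ℝ), v) ∈ indepPairs := by
  by_cases h : (u, (![0,1,0] : Fin 3 → ℝ)) ∈ indepPairs
  · exact ⟨_, h, base_indep⟩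
  by_cases h' : (u, (![0,0,1] : Fin 3 → ℝ)) ∈ indepPairs
  · exact ⟨_, h', base_indep'⟩
  exfalso
  rw [indep_iff hu, Set.notMem_compl_iff, SetLike.mem_coe, Submodule.mem_span_singleton] at h h'
  obtain ⟨a, ha⟩ := h
  obtain ⟨c, hc⟩ := h'
  have a1 := congrFun ha 1
  have a2 := congrFun ha 2
  have c2 := congrFun hc 2
  simp at a1 a2 c2
  rcases a2 with a2 | a2
  · simp [a2] at a1
  · simp [a2] at c2

lemma indep_join_base {p : (Fin 3 → ℝ) × (Fin 3 → ℝ)} (h : p ∈ indepPairs) :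
    JoinedIn indepPairs p (![1,0,0], ![0,1,0]) := by
  obtain ⟨u, v⟩ := p
  obtain ⟨w, hw, hw'⟩ := exists_aux (indep_ne h)
  exact ((join_snd h hw).trans (join_fst hw hw')).trans (join_snd hw' base_indep)

lemma q_expand {b : ℕ} (x y : Fin b → ℝ) (s t : ℝ) :
    qR (s • x + t • y) = s ^ 2 * qR x + 2 * s * t * bR x y + t ^ 2 * qR y := by
  simp only [qR, bR, Finset.mul_sum, ← Finset.sum_add_distrib]
  refine Finset.sum_congr rfl fun i _ => ?_
  simp only [Pi.add_apply, Pi.smul_apply, smul_eq_mul]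
  ring

lemma b_expand {b : ℕ} (x y : Fin b → ℝ) (c s t : ℝ) :
    bR (c • x) (s • x + t • y) = c * s * qR x + c * t * bR x y := by
  simp only [qR, bR, Finset.mul_sum, ← Finset.sum_add_distrib]
  refine Finset.sum_congr rfl fun i _ => ?_
  simp only [Pi.add_apply, Pi.smul_apply, smul_eq_mul]
  ring

/-- Embedding of `ℝ³`. -/
def emb (b : ℕ) (u : Fin 3 → ℝ) : Fin b → ℝ :=
  fun i => if h : (i : ℕ) < 3 then u ⟨i, h⟩ else 0

/-- Projection to `ℝ³`. -/
def prj {b : ℕ} (hb : 3 ≤ b) (x : Fin b → ℝ) : Fin 3 → ℝ := fun i => x (Fin.castLE hb i)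

/-- Scaling of the negative part. -/
def shr {b : ℕ} (r : ℝ) (x : Fin b → ℝ) : Fin b → ℝ :=
  fun i => if (i : ℕ) < 3 then x i else r * x i

lemma emb_cont (b : ℕ) : Continuous (emb b) := by
  refine continuous_pi fun i => ?_
  unfold emb
  by_cases h : (i : ℕ) < 3
  · simp only [h, dif_pos]; fun_prop
  · simp only [h, dif_neg, not_false_eq_true]; fun_prop

lemma shr_cont {b : ℕ} (x : Fin b → ℝ) : Continuous (fun r => shr r x) := by
  refine continuous_pi fun i => ?_
  unfold shr
  by_cases h : (i : ℕ) < 3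
  · simp only [h, if_pos]; fun_prop
  · simp only [h, if_neg, not_false_eq_true]; fun_prop

lemma q_shr {b : ℕ} (r : ℝ) (h0 : 0 ≤ r) (h1 : r ≤ 1) (x : Fin b → ℝ) : qR x ≤ qR (shr r x) := by
  unfold qR bR
  refine Finset.sum_le_sum fun i _ => ?_
  unfold eps shr
  split_ifs with h
  · rfl
  · have : r * r ≤ 1 := by nlinarith
    nlinarith [mul_self_nonneg (x i)]

lemma shr_lin {b : ℕ} (r s t : ℝ) (x y : Fin b → ℝ) :
    s • shr r x + t • shr r y = shr r (s • x + t • y) := by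
  ext i
  simp only [shr, Pi.add_apply, Pi.smul_apply, smul_eq_mul]
  split_ifs <;> ring

lemma emb_lin {b : ℕ} (s t : ℝ) (x y : Fin 3 → ℝ) :
    s • emb b x + t • emb b y = emb b (s • x + t • y) := by
  ext i
  simp only [emb, Pi.add_apply, Pi.smul_apply, smul_eq_mul]
  split_ifs <;> simp

lemma q_emb {b : ℕ} (hb : 3 ≤ b) {u : Fin 3 → ℝ} (hu : u ≠ 0) : 0 < qR (emb b u) := by
  obtain ⟨j, hj⟩ := Function.ne_iff.1 hu
  unfold qR bR
  refine Finset.sum_pos' (fun i _ => ?_) ⟨Fin.castLE hb j, Finset.mem_univ _, ?_⟩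
  · unfold eps emb
    split_ifs with h
    · rw [one_mul]; exact mul_self_nonneg _
    · simp
  · have : ((Fin.castLE hb j : Fin b) : ℕ) < 3 := j.2
    unfold eps emb
    simp only [this, if_pos, dif_pos, one_mul]
    exact mul_self_pos.2 hj

lemma emb_prj {b : ℕ} (hb : 3 ≤ b) (x : Fin b → ℝ) : emb b (prj hb x) = shr 0 x := by
  ext i
  unfold emb prj shr
  split_ifs with h
  · rfl
  · simp

lemma emb_mem {b : ℕ} (hb : 3 ≤ b) {p : (Fin 3 → ℝ) × (Fin 3 → ℝ)} (h : p ∈ indepPairs) :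
    (emb b p.1, emb b p.2) ∈ posPairs b := by
  intro s t hst
  simp only [emb_lin]
  refine q_emb hb fun h0 => ?_
  have := h s t h0
  tauto

lemma shr_mem {b : ℕ} {x y : Fin b → ℝ} (h : (x, y) ∈ posPairs b) {r : ℝ} (h0 : 0 ≤ r)
    (h1 : r ≤ 1) : (shr r x, shr r y) ∈ posPairs b := by
  intro s t hst
  simp only [shr_lin]
  exact (h s t hst).trans_le (q_shr r h0 h1 _)

lemma prj_mem {b : ℕ} (hb : 3 ≤ b) {x y : Fin b → ℝ} (h : (x, y) ∈ posPairs b) :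
    (prj hb x, prj hb y) ∈ indepPairs := by
  intro s t hst
  by_contra hne
  have h1 := shr_mem h le_rfl zero_le_one s t (by tauto)
  simp only [← emb_prj hb, emb_lin] at h1
  simp only at hst
  rw [hst] at h1
  simp [qR, bR, emb] at h1

lemma posPairs_pc {b : ℕ} (hb : 3 ≤ b) : IsPathConnected (posPairs b) := by
  refine ⟨_, emb_mem hb base_indep, ?_⟩
  rintro ⟨x, y⟩ h
  refine JoinedIn.symm ?_
  have h1 : JoinedIn (posPairs b) (shr 0 x, shr 0 y) (x, y) := by
    refine JoinedIn.ofLine (f := fun r => (shr r x, shr r y))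
      ((shr_cont x).prodMk (shr_cont y)).continuousOn rfl ?_ ?_
    · refine Prod.ext (funext fun i => ?_) (funext fun i => ?_) <;> simp [shr]
    · rintro _ ⟨r, hr, rfl⟩
      exact shr_mem h hr.1 hr.2
  refine h1.symm.trans ?_
  have h2 := indep_join_base (prj_mem hb h)
  have h3 := h2.map (f := fun p => (emb b p.1, emb b p.2))
    (((emb_cont b).comp continuous_fst).prodMk ((emb_cont b).comp continuous_snd))
  simp only [emb_prj] at h3
  refine h3.mono ?_
  rintro _ ⟨p, hp, rfl⟩
  exact emb_mem hb hp

lemma qC_eq {b : ℕ} (x y : Fin b → ℝ) :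
    qC (fun i => (x i : ℂ) + Complex.I * (y i : ℂ)) =
      ((qR x - qR y : ℝ) : ℂ) + Complex.I * ((2 * bR x y : ℝ) : ℂ) := by
  simp only [qC, bC, qR, bR, ← Finset.sum_sub_distrib, Complex.ofReal_sum, Finset.mul_sum,
    ← Finset.sum_add_distrib]
  refine Finset.sum_congr rfl fun i _ => ?_
  push_cast
  linear_combination (eps i : ℂ) * y i * y i * Complex.I_mul_I

lemma bC_eq {b : ℕ} (x y : Fin b → ℝ) :
    (bC (fun i => (x i : ℂ) + Complex.I * (y i : ℂ))
      (conjVec (fun i => (x i : ℂ) + Complex.I * (y i : ℂ)))).re = qR x + qR y := by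
  have : bC (fun i => (x i : ℂ) + Complex.I * (y i : ℂ))
      (conjVec (fun i => (x i : ℂ) + Complex.I * (y i : ℂ))) = ((qR x + qR y : ℝ) : ℂ) := by
    simp only [bC, conjVec, qR, bR, ← Finset.sum_add_distrib, Complex.ofReal_sum]
    refine Finset.sum_congr rfl fun i _ => ?_
    simp only [map_add, map_mul, Complex.conj_I, Complex.conj_ofReal]
    push_cast
    linear_combination - (eps i : ℂ) * y i * y i * Complex.I_mul_I
  rw [this, Complex.ofReal_re]

lemma isPeriodVec_iff {b : ℕ} (x y : Fin b → ℝ) :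
    isPeriodVec (fun i => (x i : ℂ) + Complex.I * (y i : ℂ)) ↔
      qR x = qR y ∧ bR x y = 0 ∧ 0 < qR x + qR y := by
  unfold isPeriodVec
  rw [qC_eq, bC_eq, Complex.ext_iff]
  simp [sub_eq_zero, and_assoc]

lemma isPeriodVec_ne {b : ℕ} {z : Fin b → ℂ} (h : isPeriodVec z) : z ≠ 0 := by
  rintro rfl
  simpa [bC] using h.2

/-- Gram-Schmidt. -/
def gs {b : ℕ} (p : (Fin b → ℝ) × (Fin b → ℝ)) : Fin b → ℂ := fun i =>
  (((Real.sqrt (qR p.1 * qR p.2 - bR p.1 p.2 ^ 2)) • p.1) i : ℂ) +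
    Complex.I * (((-bR p.1 p.2) • p.1 + qR p.1 • p.2) i : ℂ)

lemma gs_cont {b : ℕ} : Continuous (gs (b := b)) := by
  unfold gs qR bR
  simp only [Pi.add_apply, Pi.smul_apply, smul_eq_mul]
  fun_prop

lemma pos_fst {b : ℕ} {p : (Fin b → ℝ) × (Fin b → ℝ)} (h : p ∈ posPairs b) : 0 < qR p.1 := by
  have := h 1 0 (by simp)
  simpa using this

lemma pos_disc {b : ℕ} {p : (Fin b → ℝ) × (Fin b → ℝ)} (h : p ∈ posPairs b) :
    0 < qR p.1 * qR p.2 - bR p.1 p.2 ^ 2 := by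
  have h1 := pos_fst h
  have := h (-bR p.1 p.2) (qR p.1) (Or.inr h1.ne')
  rw [q_expand] at this
  refine pos_of_mul_pos_right (a := qR p.1) ?_ h1.le
  nlinarith

lemma gs_period {b : ℕ} {p : (Fin b → ℝ) × (Fin b → ℝ)} (h : p ∈ posPairs b) :
    isPeriodVec (gs p) := by
  have h1 := pos_fst h
  have h2 := pos_disc h
  have hs := Real.sq_sqrt h2.le
  have hx := q_expand p.1 p.2 (Real.sqrt (qR p.1 * qR p.2 - bR p.1 p.2 ^ 2)) 0
  rw [zero_smul, add_zero, hs] at hx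
  unfold gs
  rw [isPeriodVec_iff, hx, q_expand, b_expand]
  refine ⟨by ring, by ring, ?_⟩
  have := mul_pos h2 h1
  nlinarith

lemma gs_surj {b : ℕ} {z : Fin b → ℂ} (h : isPeriodVec z) :
    ∃ p ∈ posPairs b, ∃ a : ℂ, a • z = gs p := by
  have hz : z = fun i => (rePart z i : ℂ) + Complex.I * (imPart z i : ℂ) := by
    ext i
    simp only [rePart, imPart]
    rw [mul_comm, Complex.re_add_im]
  have h' := h
  rw [hz, isPeriodVec_iff] at h'
  obtain ⟨h1, h2, h3⟩ := h'
  have h4 : 0 < qR (rePart z) := by linarith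
  refine ⟨(rePart z, imPart z), ?_, (qR (rePart z) : ℂ), ?_⟩
  · intro s t hst
    simp only [q_expand, h2, ← h1]
    have : 0 < s ^ 2 + t ^ 2 := by
      rcases hst with h | h <;> positivity
    nlinarith
  · ext i
    have hzi := congrFun hz i
    simp only [gs, h2, ← h1, Pi.smul_apply, Pi.add_apply, smul_eq_mul]
    have : Real.sqrt (qR (rePart z) * qR (rePart z) - 0 ^ 2) = qR (rePart z) := by
      rw [← Real.sqrt_mul_self h4.le]; simp
    rw [this, hzi]
    push_cast
    ring

lemma mk_cont {X : Type*} [TopologicalSpace X] {b : ℕ} (f : X → Fin b → ℂ) (hf : Continuous f)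
    (h0 : ∀ x, f x ≠ 0) : Continuous (fun x => Projectivization.mk ℂ (f x) (h0 x)) := by
  have : Continuous (fun x => (⟨f x, h0 x⟩ : {v : Fin b → ℂ // v ≠ 0})) := hf.subtype_mk _
  exact continuous_quotient_mk'.comp this

lemma periodDomain_pc {b : ℕ} (hb : 3 ≤ b) : IsPathConnected (periodDomain b) := by
  have hF := isPathConnected_iff_pathConnectedSpace.1 (posPairs_pc hb)
  have hr := isPathConnected_range (mk_cont (fun p : posPairs b => gs p.1)
    (gs_cont.comp continuous_subtype_val) (fun p => isPeriodVec_ne (gs_period p.2)))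
  convert hr using 1
  ext x
  constructor
  · rintro ⟨z, hz, rfl, h⟩
    obtain ⟨p, hp, a, ha⟩ := gs_surj h
    refine ⟨⟨p, hp⟩, ?_⟩
    exact (Projectivization.mk_eq_mk_iff' ℂ _ _ _ _).2 ⟨a, ha⟩
  · rintro ⟨p, rfl⟩
    exact ⟨_, _, rfl, gs_period p.2⟩

/-- For `b ≥ 3` the period domain is nonempty and path-connected. -/
theorem stmt0 (b : ℕ) (hb : 3 ≤ b) :
    (periodDomain b).Nonempty ∧ IsPathConnected (periodDomain b) := by
  exact ⟨(periodDomain_pc hb).nonempty, periodDomain_pc hb⟩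
end
end

section
/- Let b ≥ 3. The period domain D, with the subspace topology inherited from ℙ(ℂ^b), is a simply connected topological space: it is path-connected and its fundamental group is trivial. -/
noncomputable section

open scoped BigOperators

open Topology unitInterval

theorem mk_eq_of_simply {X : Type*} [TopologicalSpace X] {U : Set X} (hU : IsSimplyConnected U)
    {x y : X} (p q : Path x y) (hp : ∀ t, p t ∈ U) (hq : ∀ t, q t ∈ U) :
    Path.Homotopic.Quotient.mk p = Path.Homotopic.Quotient.mk q := by
  have := hU.simplyConnectedSpace
  have hx : x ∈ U := by simpa using hp 0
  have hy : y ∈ U := by simpa using hp 1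
  let p' : Path (⟨x, hx⟩ : U) ⟨y, hy⟩ :=
    { toFun := fun t => ⟨p t, hp t⟩, continuous_toFun := by fun_prop,
      source' := by simp, target' := by simp }
  let q' : Path (⟨x, hx⟩ : U) ⟨y, hy⟩ :=
    { toFun := fun t => ⟨q t, hq t⟩, continuous_toFun := by fun_prop,
      source' := by simp, target' := by simp }
  have h := (SimplyConnectedSpace.paths_homotopic p' q').map
    (⟨Subtype.val, continuous_subtype_val⟩ : C(U, X))
  exact Path.Homotopic.Quotient.eq.2 h

theorem simplyConnected_of_cover {X : Type*} [TopologicalSpace X] {U V : Set X}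
    (hUo : IsOpen U) (hVo : IsOpen V) (hU : IsSimplyConnected U) (hV : IsSimplyConnected V)
    (hUV : IsPathConnected (U ∩ V)) (hcov : ∀ x, x ∈ U ∨ x ∈ V) : SimplyConnectedSpace X := by
  obtain ⟨x0, hx0⟩ := hUV.nonempty
  have key : ∀ x, ∃ q : Path.Homotopic.Quotient x0 x,
      (∀ p : Path x0 x, (∀ t, p t ∈ U) → Path.Homotopic.Quotient.mk p = q) ∧
      (∀ p : Path x0 x, (∀ t, p t ∈ V) → Path.Homotopic.Quotient.mk p = q) := by
    intro x
    by_cases h1 : x ∈ U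
    · by_cases h2 : x ∈ V
      · obtain ⟨p, hp⟩ := hUV.joinedIn x0 hx0 x ⟨h1, h2⟩
        exact ⟨Path.Homotopic.Quotient.mk p, fun q hq => mk_eq_of_simply hU _ _ hq fun t => (hp t).1,
          fun q hq => mk_eq_of_simply hV _ _ hq fun t => (hp t).2⟩
      · obtain ⟨p, hp⟩ := hU.isPathConnected.joinedIn x0 hx0.1 x h1
        exact ⟨Path.Homotopic.Quotient.mk p, fun q hq => mk_eq_of_simply hU _ _ hq hp,
          fun q hq => (h2 (by simpa using hq 1)).elim⟩
    · have h2 := (hcov x).resolve_left h1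
      obtain ⟨p, hp⟩ := hV.isPathConnected.joinedIn x0 hx0.2 x h2
      exact ⟨Path.Homotopic.Quotient.mk p, fun q hq => (h1 (by simpa using hq 1)).elim,
        fun q hq => mk_eq_of_simply hV _ _ hq hp⟩
  choose c hcU hcV using key
  have loc : ∀ W : Set X, W = U ∨ W = V → ∀ x y (γ : Path x y), (∀ t, γ t ∈ W) →
      Path.Homotopic.Quotient.trans (c x) (Path.Homotopic.Quotient.mk γ) = c y := by
    intro W hW x y γ hγ
    have hc : ∀ y (p : Path x0 y), (∀ t, p t ∈ W) → Path.Homotopic.Quotient.mk p = c y := by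
      rcases hW with rfl | rfl
      · exact hcU
      · exact hcV
    have hx : x ∈ W := by simpa using hγ 0
    have hWp : IsPathConnected W ∧ x0 ∈ W := by
      rcases hW with rfl | rfl
      · exact ⟨hU.isPathConnected, hx0.1⟩
      · exact ⟨hV.isPathConnected, hx0.2⟩
    obtain ⟨p, hp⟩ := hWp.1.joinedIn x0 hWp.2 x hx
    rw [← hc x p hp, ← Path.Homotopic.Quotient.mk_trans]
    apply hc
    intro t
    have : (p.trans γ) t ∈ Set.range (p.trans γ) := ⟨t, rfl⟩
    rw [Path.trans_range] at this
    rcases this with ⟨s, hs⟩ | ⟨s, hs⟩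
    · rw [← hs]; exact hp s
    · rw [← hs]; exact hγ s
  have glob : ∀ x y (γ : Path x y), Path.Homotopic.Quotient.trans (c x) (Path.Homotopic.Quotient.mk γ) = c y := by
    intro x y γ
    have h : ∀ s t : I, Path.Homotopic.Quotient.trans (c (γ s)) (Path.Homotopic.Quotient.mk (γ.subpath s t)) = c (γ t) := by
      intro s t
      have aux := isPreconnected_univ.induction₂
        (fun s t : I => Path.Homotopic.Quotient.trans (c (γ s)) (Path.Homotopic.Quotient.mk (γ.subpath s t)) = c (γ t))
        ?_ ?_ ?_ (Set.mem_univ s) (Set.mem_univ t)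
      · exact aux
      · intro s _
        rw [nhdsWithin_univ]
        have : ∃ W : Set X, (W = U ∨ W = V) ∧ IsOpen W ∧ γ s ∈ W := by
          rcases hcov (γ s) with h | h
          · exact ⟨U, Or.inl rfl, hUo, h⟩
          · exact ⟨V, Or.inr rfl, hVo, h⟩
        obtain ⟨W, hW, hWo, hs⟩ := this
        have hn : γ ⁻¹' W ∈ 𝓝 s := (hWo.preimage γ.continuous).mem_nhds hs
        have hn' := Filter.Tendsto.eventually
          (Filter.Tendsto.uIcc (f := fun _ : I => s) (g := fun t : I => t)
            (l := 𝓝 s) (lb := 𝓝 s) tendsto_const_nhds Filter.tendsto_id)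
          (Filter.eventually_smallSets_subset.2 hn)
        filter_upwards [hn'] with t ht
        apply loc W hW
        intro r
        have : (γ.subpath s t) r ∈ Set.range (γ.subpath s t) := ⟨r, rfl⟩
        rw [Path.range_subpath] at this
        obtain ⟨r', hr', e⟩ := this
        rw [← e]
        exact ht hr'
      · intro r s t _ _ _ h1 h2
        have := Path.Homotopic.Quotient.eq.2 ⟨Path.Homotopy.subpathTransSubpath γ r s t⟩
        show _ = _
        rw [← this, Path.Homotopic.Quotient.mk_trans, ← Path.Homotopic.Quotient.trans_assoc, h1, h2]
      · intro s t _ _ h1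
        show _ = _
        rw [← h1, ← Path.symm_subpath, Path.Homotopic.Quotient.mk_symm, Path.Homotopic.Quotient.trans_assoc]
        simp
    have h01 := h 0 1
    rw [Path.subpath_zero_one] at h01
    have cst : ∀ x' y' (e0 : x' = x) (e1 : y' = y),
        Path.Homotopic.Quotient.trans (c x') (Path.Homotopic.Quotient.mk (γ.cast e0 e1)) = c y' →
        Path.Homotopic.Quotient.trans (c x) (Path.Homotopic.Quotient.mk γ) = c y := by
      rintro _ _ rfl rfl h
      exact h
    exact cst _ _ _ _ h01
  rw [simply_connected_iff_unique_homotopic]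
  refine ⟨⟨x0⟩, fun x y => ⟨⟨⟨Path.Homotopic.Quotient.trans (Path.Homotopic.Quotient.symm (c x)) (c y)⟩, ?_⟩⟩⟩
  intro q
  induction q using Path.Homotopic.Quotient.ind with
  | mk γ =>
    show _ = Path.Homotopic.Quotient.trans _ _
    rw [← glob x y γ, ← Path.Homotopic.Quotient.trans_assoc]
    simp

theorem bC_comm' {b : ℕ} (z w : Fin b → ℂ) : bC z w = bC w z := by
  unfold bC
  exact Finset.sum_congr rfl fun i _ => by ring

theorem bC_add_left' {b : ℕ} (z z' w : Fin b → ℂ) : bC (z + z') w = bC z w + bC z' w := by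
  unfold bC
  rw [← Finset.sum_add_distrib]
  exact Finset.sum_congr rfl fun i _ => by simp only [Pi.add_apply]; ring

theorem bC_smul_left' {b : ℕ} (c : ℂ) (z w : Fin b → ℂ) : bC (c • z) w = c * bC z w := by
  unfold bC
  rw [Finset.mul_sum]
  exact Finset.sum_congr rfl fun i _ => by simp only [Pi.smul_apply, smul_eq_mul]; ring

theorem bC_add_right' {b : ℕ} (z w w' : Fin b → ℂ) : bC z (w + w') = bC z w + bC z w' := by
  rw [bC_comm', bC_add_left', bC_comm' w, bC_comm' w']

theorem bC_smul_right' {b : ℕ} (c : ℂ) (z w : Fin b → ℂ) : bC z (c • w) = c * bC z w := by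
  rw [bC_comm', bC_smul_left', bC_comm' w]

theorem conjVec_conjVec {b : ℕ} (z : Fin b → ℂ) : conjVec (conjVec z) = z := by
  funext i; simp [conjVec]

theorem conjVec_add {b : ℕ} (z w : Fin b → ℂ) : conjVec (z + w) = conjVec z + conjVec w := by
  funext i; simp [conjVec]

theorem conjVec_smul {b : ℕ} (c : ℂ) (z : Fin b → ℂ) :
    conjVec (c • z) = (starRingEnd ℂ c) • conjVec z := by
  funext i; simp [conjVec]

theorem bC_conj {b : ℕ} (z w : Fin b → ℂ) :
    bC (conjVec z) (conjVec w) = starRingEnd ℂ (bC z w) := by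
  unfold bC
  rw [map_sum]
  exact Finset.sum_congr rfl fun i _ => by simp [conjVec]

/-- the hermitian norm of a vector -/
def hh {b : ℕ} (z : Fin b → ℂ) : ℝ := (bC z (conjVec z)).re

theorem bC_self_conj {b : ℕ} (z : Fin b → ℂ) : bC z (conjVec z) = (hh z : ℂ) := by
  have h : starRingEnd ℂ (bC z (conjVec z)) = bC z (conjVec z) := by
    rw [← bC_conj, conjVec_conjVec, bC_comm']
  exact (Complex.conj_eq_iff_re.1 h).symm

theorem hh_eq_sum {b : ℕ} (z : Fin b → ℂ) : hh z = ∑ i, eps i * ‖z i‖ ^ 2 := by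
  have : bC z (conjVec z) = ((∑ i, eps i * ‖z i‖ ^ 2 : ℝ) : ℂ) := by
    unfold bC conjVec
    push_cast
    refine Finset.sum_congr rfl fun i _ => ?_
    rw [mul_assoc, Complex.mul_conj']
  rw [hh, this, Complex.ofReal_re]

theorem hh_smul {b : ℕ} (c : ℂ) (z : Fin b → ℂ) : hh (c • z) = ‖c‖ ^ 2 * hh z := by
  rw [hh_eq_sum, hh_eq_sum, Finset.mul_sum]
  refine Finset.sum_congr rfl fun i _ => ?_
  simp only [Pi.smul_apply, smul_eq_mul, norm_mul]; ring

theorem qC_smul {b : ℕ} (c : ℂ) (z : Fin b → ℂ) : qC (c • z) = c ^ 2 * qC z := by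
  unfold qC
  rw [bC_smul_left', bC_smul_right']; ring

theorem isPeriodVec_smul {b : ℕ} {c : ℂ} (hc : c ≠ 0) {z : Fin b → ℂ} (hz : isPeriodVec z) :
    isPeriodVec (c • z) := by
  refine ⟨by rw [qC_smul, hz.1, mul_zero], ?_⟩
  show 0 < hh (c • z)
  rw [hh_smul]
  have : 0 < hh z := hz.2
  have := norm_pos_iff.2 hc
  positivity

theorem isPeriodVec.ne_zero {b : ℕ} {z : Fin b → ℂ} (hz : isPeriodVec z) : z ≠ 0 := by
  rintro rfl
  have := hz.2
  simp [bC] at this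

/-- denominator -/
def den {b : ℕ} (z : Fin b → ℂ) : ℝ := hh z + √(hh z ^ 2 - ‖qC z‖ ^ 2)

/-- projection of a positive vector to a period vector spanning the same plane -/
def Rvec {b : ℕ} (z : Fin b → ℂ) : Fin b → ℂ := z + (-(qC z) / (den z : ℂ)) • conjVec z

theorem den_pos {b : ℕ} {z : Fin b → ℂ} (hz : ‖qC z‖ < hh z) : 0 < den z := by
  have h1 : 0 < hh z := (norm_nonneg _).trans_lt hz
  unfold den
  positivity

theorem isPeriodVec_Rvec {b : ℕ} {z : Fin b → ℂ} (hz : ‖qC z‖ < hh z) :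
    isPeriodVec (Rvec z) := by
  have hd := den_pos hz
  have h0 : 0 ≤ ‖qC z‖ := norm_nonneg _
  have hr2 : 0 < hh z ^ 2 - ‖qC z‖ ^ 2 := by nlinarith
  obtain ⟨r, hr⟩ : ∃ r, r = √(hh z ^ 2 - ‖qC z‖ ^ 2) := ⟨_, rfl⟩
  have hrpos : 0 < r := by rw [hr]; exact Real.sqrt_pos.2 hr2
  have hrsq : r ^ 2 = hh z ^ 2 - ‖qC z‖ ^ 2 := by rw [hr]; exact Real.sq_sqrt hr2.le
  have hden : den z = hh z + r := by rw [hr]; rfl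
  have hh0 : 0 < hh z := h0.trans_lt hz
  have hdC : ((hh z : ℂ) + r) ≠ 0 := by
    have : ((hh z + r : ℝ) : ℂ) ≠ 0 := by
      rw [Complex.ofReal_ne_zero]; positivity
    simpa using this
  have hα : qC z * starRingEnd ℂ (qC z) = (hh z : ℂ) ^ 2 - (r : ℂ) ^ 2 := by
    rw [Complex.mul_conj']
    have : ‖qC z‖ ^ 2 = hh z ^ 2 - r ^ 2 := by linarith
    exact_mod_cast congrArg (Complex.ofReal) this
  have e1 : bC (conjVec z) (conjVec z) = starRingEnd ℂ (qC z) := bC_conj z z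
  have e2 : bC (conjVec z) z = hh z := by rw [bC_comm', bC_self_conj]
  have e3 : bC z z = qC z := rfl
  constructor
  · unfold qC Rvec
    simp only [bC_add_left', bC_add_right', bC_smul_left', bC_smul_right', bC_self_conj, e1, e2, e3,
      hden]
    push_cast
    field_simp
    linear_combination (qC z) * hα
  · have : bC (Rvec z) (conjVec (Rvec z)) = ((2 * r ^ 2 / (hh z + r) : ℝ) : ℂ) := by
      unfold Rvec
      simp only [conjVec_add, conjVec_smul, conjVec_conjVec,
        bC_add_left', bC_add_right', bC_smul_left', bC_smul_right', bC_self_conj, e1, e2, e3,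
        hden, map_div₀, map_neg, Complex.conj_ofReal]
      push_cast
      field_simp
      linear_combination (-(hh z : ℂ) - 2 * r) * hα
    rw [this, Complex.ofReal_re]
    positivity

theorem den_smul {b : ℕ} (c : ℂ) (z : Fin b → ℂ) : den (c • z) = ‖c‖ ^ 2 * den z := by
  unfold den
  rw [hh_smul, qC_smul, norm_mul, norm_pow]
  rw [show (‖c‖ ^ 2 * hh z) ^ 2 - (‖c‖ ^ 2 * ‖qC z‖) ^ 2
    = (‖c‖ ^ 2) ^ 2 * (hh z ^ 2 - ‖qC z‖ ^ 2) by ring, Real.sqrt_mul (by positivity),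
    Real.sqrt_sq (by positivity)]
  ring

theorem Rvec_smul {b : ℕ} {c : ℂ} (hc : c ≠ 0) (z : Fin b → ℂ) : Rvec (c • z) = c • Rvec z := by
  unfold Rvec
  rw [den_smul, qC_smul, conjVec_smul, smul_add, smul_smul, smul_smul]
  congr 2
  push_cast
  rw [← Complex.mul_conj']
  have : starRingEnd ℂ c ≠ 0 := by simpa using hc
  by_cases hd : (den z : ℂ) = 0
  · simp [hd]
  field_simp

theorem Rvec_of_isotropic {b : ℕ} {z : Fin b → ℂ} (hz : qC z = 0) : Rvec z = z := by
  simp [Rvec, hz]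

theorem Rvec_apply_zero {b : ℕ} {z : Fin b → ℂ} {i : Fin b} (hz : z i = 0) : Rvec z i = 0 := by
  simp [Rvec, hz, conjVec]

theorem continuous_bC {b : ℕ} {Y : Type*} [TopologicalSpace Y] {f g : Y → Fin b → ℂ}
    (hf : Continuous f) (hg : Continuous g) : Continuous fun y => bC (f y) (g y) := by
  unfold bC
  fun_prop

theorem continuous_conjVec {b : ℕ} : Continuous (conjVec : (Fin b → ℂ) → _) := by
  unfold conjVec
  exact continuous_pi fun i => Complex.continuous_conj.comp (continuous_apply i)

theorem continuous_Rvec {b : ℕ} {Y : Type*} [TopologicalSpace Y] {f : Y → Fin b → ℂ}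
    (hf : Continuous f) (h : ∀ y, ‖qC (f y)‖ < hh (f y)) : Continuous fun y => Rvec (f y) := by
  have h1 : Continuous fun y => qC (f y) := continuous_bC hf hf
  have h2 : Continuous fun y => hh (f y) :=
    Complex.continuous_re.comp (continuous_bC hf (continuous_conjVec.comp hf))
  have h3 : Continuous fun y => den (f y) := by unfold den; fun_prop
  unfold Rvec
  have h4 : Continuous fun y => conjVec (f y) := continuous_conjVec.comp hf
  have h5 : Continuous fun y => -(qC (f y)) / (den (f y) : ℂ) := by
    refine h1.neg.div (Complex.continuous_ofReal.comp h3) fun y => ?_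
    rw [Complex.ofReal_ne_zero]
    exact (den_pos (h y)).ne'
  fun_prop

/-- scaling of the negative coordinates -/
def scal {b : ℕ} (t : ℝ) (z : Fin b → ℂ) : Fin b → ℂ :=
  fun i => if (i : ℕ) < 3 then z i else t * z i

theorem scal_one {b : ℕ} (z : Fin b → ℂ) : scal 1 z = z := by
  funext i; simp [scal]

theorem scal_smul {b : ℕ} (t : ℝ) (c : ℂ) (z : Fin b → ℂ) : scal t (c • z) = c • scal t z := by
  funext i
  simp only [scal, Pi.smul_apply, smul_eq_mul]
  split_ifs
  · rfl
  · ring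

theorem scal_pos {b : ℕ} {t : ℝ} (ht0 : 0 ≤ t) (ht1 : t ≤ 1) {z : Fin b → ℂ}
    (hz : isPeriodVec z) : ‖qC (scal t z)‖ < hh (scal t z) := by
  obtain ⟨a1, ha1⟩ : ∃ a, a = ∑ i : Fin b, if (i : ℕ) < 3 then z i ^ 2 else 0 := ⟨_, rfl⟩
  obtain ⟨a2, ha2⟩ : ∃ a, a = ∑ i : Fin b, if (i : ℕ) < 3 then 0 else z i ^ 2 := ⟨_, rfl⟩
  obtain ⟨n1, hn1⟩ : ∃ a, a = ∑ i : Fin b, if (i : ℕ) < 3 then ‖z i‖ ^ 2 else 0 := ⟨_, rfl⟩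
  obtain ⟨n2, hn2⟩ : ∃ a, a = ∑ i : Fin b, if (i : ℕ) < 3 then 0 else ‖z i‖ ^ 2 := ⟨_, rfl⟩
  have hq : ∀ s : ℝ, qC (scal s z) = a1 - (s : ℂ) ^ 2 * a2 := by
    intro s
    rw [ha1, ha2, Finset.mul_sum, ← Finset.sum_sub_distrib]
    unfold qC bC
    refine Finset.sum_congr rfl fun i _ => ?_
    simp only [scal, eps]
    split_ifs
    · push_cast; ring
    · push_cast; ring
  have hn : ∀ s : ℝ, hh (scal s z) = n1 - s ^ 2 * n2 := by
    intro s
    rw [hn1, hn2, Finset.mul_sum, ← Finset.sum_sub_distrib, hh_eq_sum]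
    refine Finset.sum_congr rfl fun i _ => ?_
    simp only [scal, eps]
    split_ifs
    · ring
    · rw [norm_mul, mul_pow, Complex.norm_real, Real.norm_eq_abs, sq_abs]; ring
  have hle : ‖a2‖ ≤ n2 := by
    rw [ha2, hn2]
    refine (norm_sum_le _ _).trans (Finset.sum_le_sum fun i _ => ?_)
    split_ifs
    · simp
    · rw [norm_pow]
  have h1 := hq 1
  have h2 := hn 1
  rw [scal_one] at h1 h2
  have h3 : a1 = a2 := by
    have := hz.1
    rw [h1] at this
    push_cast at this
    linear_combination this
  have h4 : n2 < n1 := by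
    have : 0 < hh z := hz.2
    linarith
  rw [hq, hn, h3, show a2 - (t : ℂ) ^ 2 * a2 = ((1 - t ^ 2 : ℝ) : ℂ) * a2 by push_cast; ring,
    norm_mul, Complex.norm_real, Real.norm_eq_abs, abs_of_nonneg (by nlinarith)]
  have : 0 ≤ 1 - t ^ 2 := by nlinarith
  nlinarith [mul_le_mul_of_nonneg_left hle this]

/-- period vectors -/
abbrev PV (b : ℕ) := {z : Fin b → ℂ // isPeriodVec z}

/-- the projection from period vectors to the period domain -/
def pr {b : ℕ} (z : PV b) : periodDomain b :=
  ⟨Projectivization.mk ℂ z.1 z.2.ne_zero, z.1, z.2.ne_zero, rfl, z.2⟩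

theorem pr_eq_iff {b : ℕ} (z w : PV b) : pr z = pr w ↔ ∃ c : ℂ, c ≠ 0 ∧ z.1 = c • w.1 := by
  rw [Subtype.ext_iff]
  show Projectivization.mk ℂ z.1 z.2.ne_zero = Projectivization.mk ℂ w.1 w.2.ne_zero ↔ _
  rw [Projectivization.mk_eq_mk_iff']
  constructor
  · rintro ⟨c, hc⟩
    refine ⟨c, ?_, hc.symm⟩
    rintro rfl
    exact z.2.ne_zero (by rw [← hc, zero_smul])
  · rintro ⟨c, _, hc⟩
    exact ⟨c, hc.symm⟩

theorem isOpenQuotientMap_projMk (b : ℕ) :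
    IsOpenQuotientMap (Projectivization.mk' ℂ : {v : Fin b → ℂ // v ≠ 0} → _) := by
  refine ⟨Quotient.mk''_surjective, continuous_quotient_mk', ?_⟩
  intro O hO
  have hq : IsQuotientMap (Projectivization.mk' ℂ : {v : Fin b → ℂ // v ≠ 0} → _) :=
    isQuotientMap_quotient_mk'
  rw [← hq.isOpen_preimage]
  have : (Projectivization.mk' ℂ : {v : Fin b → ℂ // v ≠ 0} → _) ⁻¹'
      ((Projectivization.mk' ℂ : {v : Fin b → ℂ // v ≠ 0} → _) '' O) =
      ⋃ c : ℂˣ, (fun v : {v : Fin b → ℂ // v ≠ 0} =>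
        (⟨c • v.1, (smul_ne_zero_iff_ne c).2 v.2⟩ : {v : Fin b → ℂ // v ≠ 0})) ⁻¹' O := by
    ext v
    simp only [Set.mem_preimage, Set.mem_image, Set.mem_iUnion]
    constructor
    · rintro ⟨w, hw, e⟩
      rw [Projectivization.mk'_eq_mk, Projectivization.mk'_eq_mk,
        Projectivization.mk_eq_mk_iff] at e
      obtain ⟨c, hc⟩ := e
      refine ⟨c, ?_⟩
      convert hw
    · rintro ⟨c, hc⟩
      refine ⟨_, hc, ?_⟩
      rw [Projectivization.mk'_eq_mk, Projectivization.mk'_eq_mk,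
        Projectivization.mk_eq_mk_iff]
      exact ⟨c, rfl⟩
  rw [this]
  refine isOpen_iUnion fun c => hO.preimage ?_
  fun_prop

theorem mk_mem_iff {b : ℕ} (v : {v : Fin b → ℂ // v ≠ 0}) :
    Projectivization.mk' ℂ v ∈ periodDomain b ↔ isPeriodVec v.1 := by
  constructor
  · rintro ⟨w, hw, e, hp⟩
    rw [Projectivization.mk'_eq_mk, Projectivization.mk_eq_mk_iff'] at e
    obtain ⟨c, hc⟩ := e
    have hc0 : c ≠ 0 := by
      rintro rfl
      exact hw (by rw [← hc, zero_smul])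
    have : v.1 = c⁻¹ • w := by rw [← hc, smul_smul, inv_mul_cancel₀ hc0, one_smul]
    rw [this]
    exact isPeriodVec_smul (inv_ne_zero hc0) hp
  · intro h
    exact ⟨v.1, v.2, rfl, h⟩

/-- period vectors as a preimage -/
def pvHomeo (b : ℕ) : PV b ≃ₜ
    ((Projectivization.mk' ℂ : {v : Fin b → ℂ // v ≠ 0} → _) ⁻¹' (periodDomain b)) where
  toFun z := ⟨⟨z.1, z.2.ne_zero⟩, (mk_mem_iff _).2 z.2⟩
  invFun v := ⟨v.1.1, (mk_mem_iff _).1 v.2⟩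
  left_inv _ := rfl
  right_inv _ := rfl
  continuous_toFun := by fun_prop
  continuous_invFun := by fun_prop

theorem isOpenQuotientMap_pr (b : ℕ) : IsOpenQuotientMap (pr : PV b → periodDomain b) :=
  ((isOpenQuotientMap_projMk b).restrictPreimage (periodDomain b)).comp
    (pvHomeo b).isOpenQuotientMap

theorem continuous_pr (b : ℕ) : Continuous (pr : PV b → periodDomain b) :=
  (isOpenQuotientMap_pr b).continuous

/-- the deformation upstairs -/
def Hup (b : ℕ) (p : PV b × I) : PV b :=
  ⟨Rvec (scal p.2 p.1.1), isPeriodVec_Rvec (scal_pos p.2.2.1 p.2.2.2 p.1.2)⟩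

theorem continuous_Hup (b : ℕ) : Continuous (Hup b) := by
  refine Continuous.subtype_mk (continuous_Rvec ?_ fun p => scal_pos p.2.2.1 p.2.2.2 p.1.2) _
  refine continuous_pi fun i => ?_
  have h1 : Continuous fun p : PV b × I => p.1.1 i :=
    (continuous_apply i).comp (continuous_subtype_val.comp continuous_fst)
  have h2 : Continuous fun p : PV b × I => ((p.2 : ℝ) : ℂ) :=
    Complex.continuous_ofReal.comp (continuous_subtype_val.comp continuous_snd)
  unfold scal
  split_ifs
  · exact h1
  · exact h2.mul h1

theorem pr_Hup_congr {b : ℕ} {z w : PV b} (t : I) (h : pr z = pr w) :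
    pr (Hup b (z, t)) = pr (Hup b (w, t)) := by
  rw [pr_eq_iff] at h ⊢
  obtain ⟨c, hc, e⟩ := h
  refine ⟨c, hc, ?_⟩
  simp only [Hup, e, scal_smul, Rvec_smul hc]

/-- the deformation -/
def HD (b : ℕ) : C(periodDomain b × I, periodDomain b) :=
  ((isOpenQuotientMap_pr b).prodMap IsOpenQuotientMap.id).isQuotientMap.lift
    (f := ⟨Prod.map (pr : PV b → _) (id : I → I), (continuous_pr b).prodMap continuous_id⟩)
    ⟨fun p => pr (Hup b p), (continuous_pr b).comp (continuous_Hup b)⟩ (by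
      rintro ⟨z, t⟩ ⟨w, s⟩ h
      simp only [ContinuousMap.coe_mk, Prod.map_apply, id, Prod.mk.injEq] at h
      obtain ⟨h, rfl⟩ := h
      exact pr_Hup_congr t h)

theorem HD_apply {b : ℕ} (z : PV b) (t : I) : HD b (pr z, t) = pr (Hup b (z, t)) := by
  have h := ((isOpenQuotientMap_pr b).prodMap IsOpenQuotientMap.id).isQuotientMap.lift_comp
    (f := ⟨Prod.map (pr : PV b → _) (id : I → I), (continuous_pr b).prodMap continuous_id⟩)
    ⟨fun p => pr (Hup b p), (continuous_pr b).comp (continuous_Hup b)⟩ (by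
      rintro ⟨z, t⟩ ⟨w, s⟩ h
      simp only [ContinuousMap.coe_mk, Prod.map_apply, id, Prod.mk.injEq] at h
      obtain ⟨h, rfl⟩ := h
      exact pr_Hup_congr t h)
  exact DFunLike.congr_fun h (z, t)

/-- the conic -/
def Conic (b : ℕ) : Set (periodDomain b) :=
  {x | ∃ z : PV b, pr z = x ∧ ∀ i : Fin b, 3 ≤ (i : ℕ) → z.1 i = 0}

theorem pr_mem_Con {b : ℕ} (z : PV b) :
    pr z ∈ Conic b ↔ ∀ i : Fin b, 3 ≤ (i : ℕ) → z.1 i = 0 := by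
  constructor
  · rintro ⟨w, e, h⟩ i hi
    rw [eq_comm, pr_eq_iff] at e
    obtain ⟨c, _, e⟩ := e
    simp [e, h i hi]
  · exact fun h => ⟨z, rfl, h⟩

theorem HD_zero_mem {b : ℕ} (x : periodDomain b) : HD b (x, 0) ∈ Conic b := by
  obtain ⟨z, rfl⟩ := (isOpenQuotientMap_pr b).surjective x
  rw [HD_apply, pr_mem_Con]
  intro i hi
  apply Rvec_apply_zero
  simp [scal, not_lt.2 hi]

theorem HD_one {b : ℕ} (x : periodDomain b) : HD b (x, 1) = x := by
  obtain ⟨z, rfl⟩ := (isOpenQuotientMap_pr b).surjective x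
  rw [HD_apply]
  congr 1
  apply Subtype.ext
  simp only [Hup, Set.Icc.coe_one, scal_one]
  exact Rvec_of_isotropic z.2.1

theorem HD_zero_of_mem {b : ℕ} {x : periodDomain b} (hx : x ∈ Conic b) : HD b (x, 0) = x := by
  obtain ⟨z, rfl, hz⟩ := hx
  rw [HD_apply]
  congr 1
  apply Subtype.ext
  have : scal 0 z.1 = z.1 := by
    funext i
    simp only [scal]
    split_ifs with h
    · rfl
    · simp [hz i (not_lt.1 h)]
  simp only [Hup, Set.Icc.coe_zero, this]
  exact Rvec_of_isotropic z.2.1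

/-- the period domain retracts to the conic -/
def conEquiv (b : ℕ) : ContinuousMap.HomotopyEquiv (periodDomain b) (Conic b) where
  toFun := ⟨fun x => ⟨HD b (x, 0), HD_zero_mem x⟩, by fun_prop⟩
  invFun := ⟨Subtype.val, continuous_subtype_val⟩
  left_inv := ⟨{
    toFun := fun p => HD b (p.2, p.1)
    continuous_toFun := by fun_prop
    map_zero_left := fun x => rfl
    map_one_left := fun x => HD_one x }⟩
  right_inv := by
    have : ∀ f : C(Conic b, Conic b), f = ContinuousMap.id _ → f.Homotopic (ContinuousMap.id _) := by
      rintro _ rfl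
      exact ContinuousMap.Homotopic.refl _
    apply this
    ext1 x
    exact Subtype.ext (HD_zero_of_mem x.2)

theorem bC_three {b : ℕ} (hb : 3 ≤ b) (z w : Fin b → ℂ)
    (hz : ∀ i : Fin b, 3 ≤ (i : ℕ) → z i = 0) :
    bC z w = z ⟨0, by omega⟩ * w ⟨0, by omega⟩ + z ⟨1, by omega⟩ * w ⟨1, by omega⟩ +
      z ⟨2, by omega⟩ * w ⟨2, by omega⟩ := by
  obtain ⟨n, rfl⟩ : ∃ n, b = n + 3 := ⟨b - 3, by omega⟩
  unfold bC
  rw [Fin.sum_univ_succ, Fin.sum_univ_succ, Fin.sum_univ_succ]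
  have : ∀ i : Fin n, z i.succ.succ.succ = 0 := fun i => hz _ (by simp)
  simp only [this, mul_zero, zero_mul, Finset.sum_const_zero, add_zero]
  have e0 : (0 : Fin (n + 3)) = ⟨0, by omega⟩ := rfl
  have e1 : (Fin.succ 0 : Fin (n + 3)) = ⟨1, by omega⟩ := rfl
  have e2 : (Fin.succ (Fin.succ 0) : Fin (n + 3)) = ⟨2, by omega⟩ := rfl
  rw [e0, e1, e2]
  simp [eps]
  ring

/-- parametrisation of a chart of the conic -/
def cvec (b : ℕ) (k s : ℂ) : Fin b → ℂ := fun i =>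
  if (i : ℕ) = 0 then (1 - s ^ 2) / 2 else if (i : ℕ) = 1 then k * (s ^ 2 + 1) / 2 else
    if (i : ℕ) = 2 then s else 0

theorem cvec_zero {b : ℕ} (k s : ℂ) (i : Fin b) (hi : 3 ≤ (i : ℕ)) : cvec b k s i = 0 := by
  unfold cvec
  rw [if_neg (by omega), if_neg (by omega), if_neg (by omega)]

theorem cvec_period {b : ℕ} (hb : 3 ≤ b) {k : ℂ} (hk : k ^ 2 = -1) (s : ℂ) :
    isPeriodVec (cvec b k s) := by
  constructor
  · unfold qC
    rw [bC_three hb _ _ (cvec_zero k s)]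
    simp only [cvec]
    norm_num
    linear_combination ((s ^ 2 + 1) / 2) ^ 2 * hk
  · rw [bC_three hb _ _ (cvec_zero k s)]
    simp only [conjVec, Complex.mul_conj, ← Complex.ofReal_add, Complex.ofReal_re]
    have h0 := Complex.normSq_nonneg (cvec b k s ⟨0, by omega⟩)
    have h1 := Complex.normSq_nonneg (cvec b k s ⟨1, by omega⟩)
    have h2 := Complex.normSq_nonneg (cvec b k s ⟨2, by omega⟩)
    by_cases hs : s = 0
    · have : 0 < Complex.normSq (cvec b k s ⟨0, by omega⟩) := by
        rw [Complex.normSq_pos]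
        simp [cvec, hs]
      linarith
    · have : 0 < Complex.normSq (cvec b k s ⟨2, by omega⟩) := by
        rw [Complex.normSq_pos]
        simp [cvec, hs]
      linarith

/-- chart coordinate -/
def vv {b : ℕ} (hb : 3 ≤ b) (k : ℂ) (z : Fin b → ℂ) : ℂ :=
  z ⟨0, by omega⟩ - k * z ⟨1, by omega⟩

theorem vv_smul {b : ℕ} (hb : 3 ≤ b) (k c : ℂ) (z : Fin b → ℂ) :
    vv hb k (c • z) = c * vv hb k z := by
  simp [vv]; ring

theorem continuous_vv {b : ℕ} (hb : 3 ≤ b) (k : ℂ) : Continuous (vv (b := b) hb k) := by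
  unfold vv
  fun_prop

/-- chart domain -/
def UU {b : ℕ} (hb : 3 ≤ b) (k : ℂ) : Set (Conic b) :=
  {x | ∃ z : PV b, pr z = x.1 ∧ vv hb k z.1 ≠ 0}

/-- the open quotient map onto the conic -/
def prC (b : ℕ) : (pr : PV b → periodDomain b) ⁻¹' (Conic b) → Conic b :=
  (Conic b).restrictPreimage pr

theorem prC_mem_UU {b : ℕ} (hb : 3 ≤ b) (k : ℂ) (z : (pr : PV b → periodDomain b) ⁻¹' (Conic b)) :
    prC b z ∈ UU hb k ↔ vv hb k z.1.1 ≠ 0 := by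
  constructor
  · rintro ⟨w, e, h⟩
    have e' : pr z.1 = pr w := e.symm
    rw [pr_eq_iff] at e'
    obtain ⟨c, hc, e'⟩ := e'
    rw [e', vv_smul]
    exact mul_ne_zero hc h
  · exact fun h => ⟨z.1, rfl, h⟩

theorem isOpenQuotientMap_prC (b : ℕ) : IsOpenQuotientMap (prC b) :=
  (isOpenQuotientMap_pr b).restrictPreimage _

theorem isOpen_UU {b : ℕ} (hb : 3 ≤ b) (k : ℂ) : IsOpen (UU hb k) := by
  rw [← (isOpenQuotientMap_prC b).isQuotientMap.isOpen_preimage]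
  have : prC b ⁻¹' UU hb k = {z | vv hb k z.1.1 ≠ 0} := by
    ext z; exact prC_mem_UU hb k z
  rw [this]
  exact isOpen_ne_fun ((continuous_vv hb k).comp
    (continuous_subtype_val.comp continuous_subtype_val)) continuous_const

/-- the vector upstairs -/
def cup {b : ℕ} (hb : 3 ≤ b) {k : ℂ} (hk : k ^ 2 = -1) (s : ℂ) :
    (pr : PV b → periodDomain b) ⁻¹' (Conic b) :=
  ⟨⟨cvec b k s, cvec_period hb hk s⟩, (pr_mem_Con _).2 (cvec_zero k s)⟩

theorem continuous_cup {b : ℕ} (hb : 3 ≤ b) {k : ℂ} (hk : k ^ 2 = -1) :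
    Continuous (cup hb hk) := by
  refine Continuous.subtype_mk (Continuous.subtype_mk (continuous_pi fun i => ?_) _) _
  unfold cvec
  split_ifs <;> fun_prop

theorem vv_cvec {b : ℕ} (hb : 3 ≤ b) {k : ℂ} (hk : k ^ 2 = -1) (s : ℂ) :
    vv hb k (cvec b k s) = 1 := by
  simp only [vv, cvec]
  norm_num
  linear_combination (-(s ^ 2 + 1) / 2) * hk

theorem vv_neg_cvec {b : ℕ} (hb : 3 ≤ b) {k : ℂ} (hk : k ^ 2 = -1) (s : ℂ) :
    vv hb (-k) (cvec b k s) = - s ^ 2 := by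
  simp only [vv, cvec]
  norm_num
  linear_combination ((s ^ 2 + 1) / 2) * hk

theorem con_eq {b : ℕ} (hb : 3 ≤ b) (z : (pr : PV b → periodDomain b) ⁻¹' (Conic b)) :
    z.1.1 ⟨0, by omega⟩ ^ 2 + z.1.1 ⟨1, by omega⟩ ^ 2 + z.1.1 ⟨2, by omega⟩ ^ 2 = 0 := by
  have h := z.1.2.1
  unfold qC at h
  rw [bC_three hb _ _ ((pr_mem_Con _).1 z.2)] at h
  linear_combination h

theorem cup_coord {b : ℕ} (hb : 3 ≤ b) {k : ℂ} (hk : k ^ 2 = -1)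
    (z : (pr : PV b → periodDomain b) ⁻¹' (Conic b)) (hz : vv hb k z.1.1 ≠ 0) :
    prC b (cup hb hk (z.1.1 ⟨2, by omega⟩ / vv hb k z.1.1)) = prC b z := by
  apply Subtype.ext
  show pr _ = pr _
  rw [eq_comm, pr_eq_iff]
  refine ⟨vv hb k z.1.1, hz, ?_⟩
  have hc := con_eq hb z
  have hv : vv hb k z.1.1 = z.1.1 ⟨0, by omega⟩ - k * z.1.1 ⟨1, by omega⟩ := rfl
  obtain ⟨v, hv'⟩ : ∃ v, v = vv hb k z.1.1 := ⟨_, rfl⟩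
  rw [← hv'] at hz hv ⊢
  funext i
  simp only [cup, cvec, Pi.smul_apply, smul_eq_mul]
  split_ifs with h0 h1 h2
  · have : i = ⟨0, by omega⟩ := Fin.ext h0
    rw [this]
    field_simp
    rw [hv]
    linear_combination hc - (z.1.1 ⟨1, by omega⟩) ^ 2 * hk
  · have : i = ⟨1, by omega⟩ := Fin.ext h1
    rw [this]
    field_simp
    rw [hv]
    linear_combination -k * hc + (2 * z.1.1 ⟨0, by omega⟩ * z.1.1 ⟨1, by omega⟩ -
      k * (z.1.1 ⟨1, by omega⟩) ^ 2) * hk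
  · have : i = ⟨2, by omega⟩ := Fin.ext h2
    rw [this]
    field_simp
  · rw [mul_zero]
    exact (pr_mem_Con _).1 z.2 i (by omega)

/-- the quotient map onto a chart domain -/
def prU {b : ℕ} (hb : 3 ≤ b) (k : ℂ) : (prC b) ⁻¹' (UU hb k) → UU hb k :=
  (UU hb k).restrictPreimage (prC b)

theorem isOpenQuotientMap_prU {b : ℕ} (hb : 3 ≤ b) (k : ℂ) : IsOpenQuotientMap (prU hb k) :=
  (isOpenQuotientMap_prC b).restrictPreimage _

/-- coordinate upstairs -/
def gup {b : ℕ} (hb : 3 ≤ b) (k : ℂ) (z : (prC b) ⁻¹' (UU hb k)) : ℂ :=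
  z.1.1.1 ⟨2, by omega⟩ / vv hb k z.1.1.1

theorem continuous_gup {b : ℕ} (hb : 3 ≤ b) (k : ℂ) : Continuous (gup hb k) := by
  unfold gup
  have hv : Continuous fun z : (prC b) ⁻¹' (UU hb k) => z.1.1.1 :=
    continuous_subtype_val.comp (continuous_subtype_val.comp continuous_subtype_val)
  refine Continuous.div ((continuous_apply _).comp hv) ((continuous_vv hb k).comp hv) fun z => ?_
  exact (prC_mem_UU hb k z.1).1 z.2

theorem gup_congr {b : ℕ} (hb : 3 ≤ b) (k : ℂ) (z w : (prC b) ⁻¹' (UU hb k))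
    (h : prU hb k z = prU hb k w) : gup hb k z = gup hb k w := by
  have h' : pr z.1.1 = pr w.1.1 := congrArg (fun x => x.1.1) h
  rw [pr_eq_iff] at h'
  obtain ⟨c, hc, e⟩ := h'
  unfold gup
  rw [e, vv_smul]
  simp only [Pi.smul_apply, smul_eq_mul]
  rw [mul_div_mul_left _ _ hc]

/-- coordinate on the chart domain -/
def gdown {b : ℕ} (hb : 3 ≤ b) (k : ℂ) (x : UU hb k) : ℂ :=
  gup hb k ((isOpenQuotientMap_prU hb k).surjective x).choose

theorem gdown_prU {b : ℕ} (hb : 3 ≤ b) (k : ℂ) (z : (prC b) ⁻¹' (UU hb k)) :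
    gdown hb k (prU hb k z) = gup hb k z :=
  gup_congr hb k _ _ ((isOpenQuotientMap_prU hb k).surjective (prU hb k z)).choose_spec

theorem continuous_gdown {b : ℕ} (hb : 3 ≤ b) (k : ℂ) : Continuous (gdown hb k) := by
  rw [← (isOpenQuotientMap_prU hb k).continuous_comp_iff]
  have : gdown hb k ∘ prU hb k = gup hb k := funext fun z => gdown_prU hb k z
  rw [this]
  exact continuous_gup hb k

theorem cup_mem {b : ℕ} (hb : 3 ≤ b) {k : ℂ} (hk : k ^ 2 = -1) (s : ℂ) :
    prC b (cup hb hk s) ∈ UU hb k := by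
  rw [prC_mem_UU]
  show vv hb k (cvec b k s) ≠ 0
  rw [vv_cvec hb hk]
  exact one_ne_zero

/-- the chart -/
def chartHomeo {b : ℕ} (hb : 3 ≤ b) {k : ℂ} (hk : k ^ 2 = -1) : ℂ ≃ₜ UU hb k where
  toFun s := ⟨prC b (cup hb hk s), cup_mem hb hk s⟩
  invFun := gdown hb k
  left_inv s := by
    have h := gdown_prU hb k ⟨cup hb hk s, cup_mem hb hk s⟩
    refine Eq.trans h ?_
    show cvec b k s ⟨2, by omega⟩ / vv hb k (cvec b k s) = s
    rw [vv_cvec hb hk]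
    simp [cvec]
  right_inv x := by
    obtain ⟨z, rfl⟩ := (isOpenQuotientMap_prU hb k).surjective x
    apply Subtype.ext
    show prC b (cup hb hk (gdown hb k (prU hb k z))) = prC b z.1
    rw [gdown_prU]
    exact cup_coord hb hk z.1 ((prC_mem_UU hb k z.1).1 z.2)
  continuous_toFun :=
    ((isOpenQuotientMap_prC b).continuous.comp (continuous_cup hb hk)).subtype_mk _
  continuous_invFun := continuous_gdown hb k

theorem isSimplyConnected_UU {b : ℕ} (hb : 3 ≤ b) {k : ℂ} (hk : k ^ 2 = -1) :
    IsSimplyConnected (UU hb k) :=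
  (chartHomeo hb hk).symm.toHomotopyEquiv.simplyConnectedSpace

theorem inter_eq {b : ℕ} (hb : 3 ≤ b) {k : ℂ} (hk : k ^ 2 = -1) :
    UU hb k ∩ UU hb (-k) = (fun s => prC b (cup hb hk s)) '' {0}ᶜ := by
  ext x
  constructor
  · rintro ⟨h1, h2⟩
    obtain ⟨z, rfl⟩ := (isOpenQuotientMap_prC b).surjective x
    rw [prC_mem_UU] at h1 h2
    refine ⟨_, ?_, cup_coord hb hk z h1⟩
    simp only [Set.mem_compl_iff, Set.mem_singleton_iff]
    refine div_ne_zero ?_ h1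
    intro h0
    have hc := con_eq hb z
    rw [h0] at hc
    refine mul_ne_zero h1 h2 ?_
    unfold vv
    linear_combination hc - (z.1.1 ⟨1, by omega⟩) ^ 2 * hk
  · rintro ⟨s, hs, rfl⟩
    refine ⟨cup_mem hb hk s, ?_⟩
    show prC b (cup hb hk s) ∈ _
    rw [prC_mem_UU]
    show vv hb (-k) (cvec b k s) ≠ 0
    rw [vv_neg_cvec hb hk]
    exact neg_ne_zero.2 (pow_ne_zero 2 hs)

theorem simplyConnected_Con {b : ℕ} (hb : 3 ≤ b) : SimplyConnectedSpace (Conic b) := by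
  have hk : Complex.I ^ 2 = -1 := Complex.I_sq
  have hk' : (-Complex.I) ^ 2 = -1 := by rw [neg_sq, hk]
  refine simplyConnected_of_cover (isOpen_UU hb Complex.I) (isOpen_UU hb (-Complex.I))
    (isSimplyConnected_UU hb hk) (isSimplyConnected_UU hb hk') ?_ ?_
  · rw [inter_eq hb hk]
    refine IsPathConnected.image ?_
      ((isOpenQuotientMap_prC b).continuous.comp (continuous_cup hb hk))
    exact isPathConnected_compl_singleton_of_one_lt_rank (by simp) 0
  · intro x
    obtain ⟨z, rfl⟩ := (isOpenQuotientMap_prC b).surjective x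
    rw [prC_mem_UU, prC_mem_UU]
    by_contra h
    push Not at h
    obtain ⟨h1, h2⟩ := h
    unfold vv at h1 h2
    have hc := con_eq hb z
    have e0 : z.1.1 ⟨0, by omega⟩ = 0 := by linear_combination (h1 + h2) / 2
    have e1 : z.1.1 ⟨1, by omega⟩ = 0 := by
      have : Complex.I * z.1.1 ⟨1, by omega⟩ = 0 := by linear_combination (h2 - h1) / 2
      exact (mul_eq_zero.1 this).resolve_left Complex.I_ne_zero
    have e2 : z.1.1 ⟨2, by omega⟩ = 0 := by
      rw [e0, e1] at hc
      simpa using hc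
    have hp := z.1.2.2
    rw [bC_three hb _ _ ((pr_mem_Con _).1 z.2), e0, e1, e2] at hp
    simp at hp

/-- For `b ≥ 3` the period domain is path-connected with trivial
fundamental group, i.e. simply connected. -/
theorem stmt1 (b : ℕ) (hb : 3 ≤ b) :
    PathConnectedSpace ↥(periodDomain b) ∧
    ∀ x : ↥(periodDomain b), Subsingleton (FundamentalGroup ↥(periodDomain b) x) := by
  have := simplyConnected_Con hb
  have : SimplyConnectedSpace (periodDomain b) := (conEquiv b).simplyConnectedSpace
  exact ⟨inferInstance, fun x => inferInstance⟩
end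
end

section
/- Let b ≥ 3 and let [z], [w] ∈ D be two (not necessarily distinct) points. Then there exists a positive three-dimensional subspace W ⊆ ℝ^b with [z], [w] ∈ T_W if and only if q is positive definite on the subspace P(z) + P(w) of ℝ^b and dim_ℝ(P(z) + P(w)) ≤ 3. -/
noncomputable section

open scoped BigOperators

theorem bR_comm' {b : ℕ} (v w : Fin b → ℝ) : bR v w = bR w v := by
  unfold bR
  exact Finset.sum_congr rfl fun i _ => by ring

theorem bR_add_left {b : ℕ} (x y w : Fin b → ℝ) : bR (x + y) w = bR x w + bR y w :=
  (bRlin w).map_add x y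

theorem bR_smul_left {b : ℕ} (c : ℝ) (x w : Fin b → ℝ) : bR (c • x) w = c * bR x w :=
  (bRlin w).map_smul c x

def bRbil (b : ℕ) : (Fin b → ℝ) →ₗ[ℝ] (Fin b → ℝ) →ₗ[ℝ] ℝ :=
  LinearMap.mk₂ ℝ bR bR_add_left bR_smul_left
    (fun m x y => by rw [bR_comm', bR_add_left, bR_comm' x, bR_comm' y])
    (fun c m x => by rw [bR_comm', bR_smul_left, bR_comm' x, smul_eq_mul])

def emb3 (b : ℕ) : (Fin 3 → ℝ) →ₗ[ℝ] (Fin b → ℝ) where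
  toFun v := fun i => if h : (i : ℕ) < 3 then v ⟨i, h⟩ else 0
  map_add' x y := by
    ext i
    by_cases h : (i : ℕ) < 3 <;> simp [h]
  map_smul' c x := by
    ext i
    by_cases h : (i : ℕ) < 3 <;> simp [h]

theorem qR_emb3 {b : ℕ} (hb : 3 ≤ b) (v : Fin 3 → ℝ) (hv : v ≠ 0) : 0 < qR (emb3 b v) := by
  unfold qR bR
  obtain ⟨j, hj⟩ := Function.ne_iff.mp hv
  have hj' : v j ≠ 0 := hj
  apply Finset.sum_pos'
  · intro i _
    by_cases h : (i : ℕ) < 3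
    · simp only [eps, emb3, LinearMap.coe_mk, AddHom.coe_mk, h, if_true, dif_pos, one_mul]
      exact mul_self_nonneg _
    · simp [emb3, h]
  · refine ⟨⟨j, by omega⟩, Finset.mem_univ _, ?_⟩
    have h : (j : ℕ) < 3 := j.2
    simp only [eps, emb3, LinearMap.coe_mk, AddHom.coe_mk, h, if_true, dif_pos, one_mul]
    exact mul_self_pos.mpr hj'

theorem exists_perp {b : ℕ} (hb : 3 ≤ b) (S : Submodule ℝ (Fin b → ℝ))
    (hS : Module.finrank ℝ S < 3) :
    ∃ e : Fin b → ℝ, 0 < qR e ∧ ∀ s ∈ S, bR e s = 0 := by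
  let f : (Fin 3 → ℝ) →ₗ[ℝ] (S →ₗ[ℝ] ℝ) :=
    (LinearMap.lcomp ℝ ℝ S.subtype) ∘ₗ (bRbil b) ∘ₗ (emb3 b)
  have hf : LinearMap.ker f ≠ ⊥ := by
    apply LinearMap.ker_ne_bot_of_finrank_lt
    have h : Module.finrank ℝ (S →ₗ[ℝ] ℝ) = Module.finrank ℝ S :=
      Subspace.dual_finrank_eq
    rw [h]
    simpa using hS
  obtain ⟨v, hv, hv0⟩ := Submodule.exists_mem_ne_zero_of_ne_bot hf
  refine ⟨emb3 b v, qR_emb3 hb v hv0, fun s hs => ?_⟩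
  exact LinearMap.congr_fun (LinearMap.mem_ker.mp hv) ⟨s, hs⟩

theorem extend_pos {b : ℕ} (hb : 3 ≤ b) (n : ℕ) : ∀ S : Submodule ℝ (Fin b → ℝ),
    PosDefOn S → Module.finrank ℝ S + n = 3 →
    ∃ W : Submodule ℝ (Fin b → ℝ), S ≤ W ∧ PosDefOn W ∧ Module.finrank ℝ W = 3 := by
  induction n with
  | zero => exact fun S hS h => ⟨S, le_rfl, hS, h⟩
  | succ n ih =>
    intro S hS h
    obtain ⟨e, he, hp⟩ := exists_perp hb S (by omega)
    have he0 : e ≠ 0 := by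
      rintro rfl
      simp [qR, bR] at he
    have heS : e ∉ S := fun hmem => he.ne' (hp e hmem)
    have hpos : PosDefOn (S ⊔ Submodule.span ℝ {e}) := by
      intro v hv hv0
      obtain ⟨s, hs, y, hy, rfl⟩ := Submodule.mem_sup.mp hv
      obtain ⟨t, rfl⟩ := Submodule.mem_span_singleton.mp hy
      have hq : qR (s + t • e) = qR s + t * t * qR e := by
        unfold qR
        rw [bR_add_left, bR_smul_left, bR_comm' s, bR_comm' e (s + _), bR_add_left, bR_add_left,
          bR_smul_left, bR_smul_left, bR_comm' s e, hp s hs]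
        ring
      rw [hq]
      by_cases hs0 : s = 0
      · subst hs0
        have ht : t ≠ 0 := by
          rintro rfl
          simp at hv0
        have : qR (0 : Fin b → ℝ) = 0 := by simp [qR, bR]
        rw [this, zero_add]
        exact mul_pos (mul_self_pos.mpr ht) he
      · have := hS s hs hs0
        have := mul_nonneg (mul_self_nonneg t) he.le
        linarith
    have hdim : Module.finrank ℝ ↥(S ⊔ Submodule.span ℝ {e}) = Module.finrank ℝ S + 1 := by
      have h1 := Submodule.finrank_sup_add_finrank_inf_eq S (Submodule.span ℝ {e})
      have h2 : S ⊓ Submodule.span ℝ {e} = ⊥ :=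
        disjoint_iff.mp ((Submodule.disjoint_span_singleton' he0).mpr heS)
      rw [h2, finrank_bot, finrank_span_singleton he0] at h1
      omega
    obtain ⟨W, hW, hW2⟩ := ih _ hpos (by omega)
    exact ⟨W, le_sup_left.trans hW, hW2⟩

theorem Pspan_le_of_mem {b : ℕ} {z : Fin b → ℂ} {hz : z ≠ 0} {W : Submodule ℝ (Fin b → ℝ)}
    (h : Projectivization.mk ℂ z hz ∈ twistorLine W) : Pspan z ≤ W := by
  obtain ⟨y, hy, hyz, -, hr, hi⟩ := h
  obtain ⟨a, ha⟩ := (Projectivization.mk_eq_mk_iff' ℂ _ _ hz hy).mp hyz.symm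
  subst ha
  unfold Pspan
  rw [Submodule.span_le]
  rintro v (rfl | rfl)
  · have : rePart (a • y) = a.re • rePart y - a.im • imPart y := by
      ext i
      simp [rePart, imPart]
    rw [this]
    exact W.sub_mem (W.smul_mem _ hr) (W.smul_mem _ hi)
  · have : imPart (a • y) = a.re • imPart y + a.im • rePart y := by
      ext i
      simp [rePart, imPart]
    rw [this]
    exact W.add_mem (W.smul_mem _ hi) (W.smul_mem _ hr)

/-- two period points lie on a common twistor line iff `q` is positive
definite on `P(z) + P(w)` and this space has dimension at most 3. -/
theorem stmt6 (b : ℕ) (hb : 3 ≤ b) (z w : Fin b → ℂ) (hz : z ≠ 0) (hw : w ≠ 0)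
    (hz' : isPeriodVec z) (hw' : isPeriodVec w) :
    (∃ W : Submodule ℝ (Fin b → ℝ), Module.finrank ℝ ↥W = 3 ∧ PosDefOn W ∧
      Projectivization.mk ℂ z hz ∈ twistorLine W ∧
      Projectivization.mk ℂ w hw ∈ twistorLine W) ↔
    (PosDefOn (Pspan z ⊔ Pspan w) ∧ Module.finrank ℝ ↥(Pspan z ⊔ Pspan w) ≤ 3) := by
  constructor
  · rintro ⟨W, hd, hp, h1, h2⟩
    have hle : Pspan z ⊔ Pspan w ≤ W := sup_le (Pspan_le_of_mem h1) (Pspan_le_of_mem h2)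
    exact ⟨fun v hv => hp v (hle hv), hd ▸ Submodule.finrank_mono hle⟩
  · rintro ⟨hp, hd⟩
    obtain ⟨W, hle, hW, hW3⟩ := extend_pos hb (3 - Module.finrank ℝ ↥(Pspan z ⊔ Pspan w)) _ hp
      (by omega)
    have hzW : Pspan z ≤ W := le_sup_left.trans hle
    have hwW : Pspan w ≤ W := le_sup_right.trans hle
    exact ⟨W, hW3, hW,
      ⟨z, hz, rfl, hz', hzW (Submodule.subset_span (by simp)),
        hzW (Submodule.subset_span (by simp))⟩,
      ⟨w, hw, rfl, hw', hwW (Submodule.subset_span (by simp)),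
        hwW (Submodule.subset_span (by simp))⟩⟩
end
end

section
/- Let n ≥ 1, let A be a Hausdorff topological space, and let π : A → ℝⁿ be a local homeomorphism. Assume that for every closed ball B̄ ⊆ ℝⁿ (the closed metric ball of any center and any nonnegative radius) and every connected component C of π⁻¹(B̄), one has π(C) = B̄. Then π is a covering map. -/
noncomputable section

open scoped BigOperators

section SheetProof

open Set Filter Topology

/-- `D` is an open set mapped bijectively onto `V` by `f`. -/
def IsSheet {A E : Type*} [TopologicalSpace A] (f : A → E) (D : Set A) (V : Set E) : Prop :=
  IsOpen D ∧ InjOn f D ∧ f '' D = V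

variable {A E : Type*} [TopologicalSpace A] {f : A → E}

theorem IsSheet.inter_preimage [TopologicalSpace E] (hf : Continuous f) {D : Set A} {V W : Set E}
    (hD : IsSheet f D V) (hW : IsOpen W) (hWV : W ⊆ V) : IsSheet f (D ∩ f ⁻¹' W) W := by
  refine ⟨hD.1.inter (hW.preimage hf), hD.2.1.mono inter_subset_left, ?_⟩
  rw [image_inter_preimage, hD.2.2, inter_eq_right.2 hWV]

theorem IsSheet.isPreconnected [TopologicalSpace E] (hf : IsOpenMap f) {D : Set A} {V : Set E}
    (hD : IsSheet f D V) (hV : IsPreconnected V) : IsPreconnected D := by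
  have h1 : IsPreconnected ((fun x : D => f x) ⁻¹' V) := by
    refine hV.preimage_of_isOpenMap ?_ ?_ ?_
    · intro x y hxy
      exact Subtype.ext (hD.2.1 x.2 y.2 hxy)
    · exact hf.comp hD.1.isOpenMap_subtype_val
    · rw [← hD.2.2]
      rintro _ ⟨x, hx, rfl⟩
      exact ⟨⟨x, hx⟩, rfl⟩
  have h2 := h1.image Subtype.val continuous_subtype_val.continuousOn
  convert h2 using 1
  ext x
  simp only [mem_image, mem_preimage, Subtype.exists, exists_and_right, exists_eq_right]
  constructor
  · intro hx
    exact ⟨hx, hD.2.2 ▸ mem_image_of_mem f hx⟩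
  · rintro ⟨hx, -⟩
    exact hx

theorem IsSheet.mem_of_mem_closure [TopologicalSpace E] [T2Space A] (hf : Continuous f)
    (ho : IsOpenMap f) {D : Set A} {V : Set E}
    (hD : IsSheet f D V) {x : A} (hx : x ∈ closure D) (hxV : f x ∈ V) : x ∈ D := by
  rw [← hD.2.2] at hxV
  obtain ⟨d, hd, hdx⟩ := hxV
  by_contra hxD
  have hne : x ≠ d := fun h => hxD (h ▸ hd)
  obtain ⟨U, W, hU, hW, hxU, hdW, hUW⟩ := t2_separation hne
  have hWD : IsOpen (W ∩ D) := hW.inter hD.1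
  have hN : IsOpen (U ∩ f ⁻¹' (f '' (W ∩ D))) := hU.inter ((ho _ hWD).preimage hf)
  obtain ⟨z, ⟨hzU, w, hw, hwz⟩, hzD⟩ :=
    mem_closure_iff.1 hx _ hN ⟨hxU, d, ⟨hdW, hd⟩, hdx⟩
  have : w = z := hD.2.1 hw.2 hzD hwz
  exact Set.disjoint_left.1 hUW hzU (this ▸ hw.1)

theorem IsSheet.subset [TopologicalSpace E] [T2Space A] (hf : Continuous f)
    (ho : IsOpenMap f) {D T : Set A} {V : Set E}
    (hD : IsSheet f D V) (hT : IsPreconnected T) (hTV : T ⊆ f ⁻¹' V) (hne : (T ∩ D).Nonempty) :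
    T ⊆ D :=
  hT.subset_of_closure_inter_subset hD.1 hne
    fun _ hx => hD.mem_of_mem_closure hf ho hx.1 (hTV hx.2)

theorem exists_small_sheet [PseudoMetricSpace E] (hf : IsLocalHomeomorph f) (x : A) {N : Set A}
    (hN : N ∈ 𝓝 x) :
    ∃ ε > 0, ∃ U ⊆ N, x ∈ U ∧ IsSheet f U (Metric.ball (f x) ε) := by
  obtain ⟨e, hxe, rfl⟩ := hf x
  obtain ⟨N', hN'N, hN'o, hxN'⟩ := mem_nhds_iff.1 hN
  have hO : IsOpen (N' ∩ e.source) := hN'o.inter e.open_source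
  have hs : IsSheet e (N' ∩ e.source) (e '' (N' ∩ e.source)) :=
    ⟨hO, e.injOn.mono inter_subset_right, rfl⟩
  obtain ⟨ε, hε, hb⟩ := Metric.isOpen_iff.1 (hf.isOpenMap _ hO) (e x) ⟨x, ⟨hxN', hxe⟩, rfl⟩
  exact ⟨ε, hε, (N' ∩ e.source) ∩ e ⁻¹' Metric.ball (e x) ε, fun z hz => hN'N hz.1.1, ⟨⟨hxN', hxe⟩, Metric.mem_ball_self hε⟩,
    hs.inter_preimage hf.continuous Metric.isOpen_ball hb⟩

variable [NormedAddCommGroup E] [NormedSpace ℝ E] [ProperSpace E] [T2Space A]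

theorem IsSheet.extend (hf : IsLocalHomeomorph f)
    (h : ∀ (c : E) (r : ℝ), 0 ≤ r →
      ∀ a ∈ f ⁻¹' Metric.closedBall c r,
        f '' connectedComponentIn (f ⁻¹' Metric.closedBall c r) a = Metric.closedBall c r)
    {c : E} {r : ℝ} (hr : 0 < r) {D : Set A} (hD : IsSheet f D (Metric.ball c r))
    {a : A} (ha : a ∈ D) :
    ∃ r' > r, ∃ D', a ∈ D' ∧ IsSheet f D' (Metric.ball c r') := by
  have hc := hf.continuous
  have ho := hf.isOpenMap
  have hcl : closure (Metric.ball c r) = Metric.closedBall c r := closure_ball c hr.ne'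
  have hDB : ∀ x ∈ D, f x ∈ Metric.ball c r := fun x hx => hD.2.2 ▸ mem_image_of_mem f hx
  have hEB : ∀ x ∈ closure D, f x ∈ Metric.closedBall c r := by
    intro x hx
    rw [← hcl]
    exact map_mem_closure hc hx hDB
  have key : ∀ x ∈ closure D, ∀ N ∈ 𝓝 x, ∃ ε > 0, ∃ U ⊆ N, x ∈ U ∧
      IsSheet f U (Metric.ball (f x) ε) ∧ U ∩ f ⁻¹' Metric.ball c r ⊆ D ∧
      U ∩ f ⁻¹' Metric.closedBall c r ⊆ closure D := by
    intro x hx N hN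
    obtain ⟨ε, hε, U, hUN, hxU, hU⟩ := exists_small_sheet hf x hN
    have h1 : U ∩ f ⁻¹' Metric.ball c r ⊆ D := by
      have hs := hU.inter_preimage hc (W := Metric.ball (f x) ε ∩ Metric.ball c r)
        (Metric.isOpen_ball.inter Metric.isOpen_ball) inter_subset_left
      have hpre := hs.isPreconnected ho
        ((convex_ball (f x) ε).inter (convex_ball c r)).isPreconnected
      have hUb : ∀ z ∈ U, f z ∈ Metric.ball (f x) ε := fun z hz => hU.2.2 ▸ mem_image_of_mem f hz
      obtain ⟨z, hzU, hzD⟩ := mem_closure_iff.1 hx U hU.1 hxU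
      have hsub := hD.subset hc ho hpre (fun z hz => hz.2.2)
        ⟨z, ⟨hzU, hUb z hzU, hDB z hzD⟩, hzD⟩
      exact fun z hz => hsub ⟨hz.1, hUb z hz.1, hz.2⟩
    refine ⟨ε, hε, U, hUN, hxU, hU, h1, ?_⟩
    rintro z ⟨hzU, hz⟩
    rw [mem_preimage, ← hcl] at hz
    refine mem_closure_iff.2 fun O hO hzO => ?_
    obtain ⟨_, ⟨w, hw, rfl⟩, hwb⟩ := mem_closure_iff.1 hz _ (ho _ (hO.inter hU.1))
      ⟨z, ⟨hzO, hzU⟩, rfl⟩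
    exact ⟨w, hw.1, h1 ⟨hw.2, hwb⟩⟩
  have hinj : InjOn f (closure D) := by
    intro x hx x' hx' hxx
    by_contra hne
    obtain ⟨N, N', hN, hN', hxN, hxN', hd⟩ := t2_separation hne
    obtain ⟨ε, hε, U, hUN, hxU, hU, hUD, -⟩ := key x hx N (hN.mem_nhds hxN)
    obtain ⟨ε', hε', U', hUN', hxU', hU', hUD', -⟩ := key x' hx' N' (hN'.mem_nhds hxN')
    have hfx := hEB x hx
    rw [← hcl] at hfx
    obtain ⟨y, hy, hyb⟩ := mem_closure_iff.1 hfx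
      (Metric.ball (f x) ε ∩ Metric.ball (f x') ε')
      (Metric.isOpen_ball.inter Metric.isOpen_ball)
      ⟨Metric.mem_ball_self hε, hxx ▸ Metric.mem_ball_self hε'⟩
    obtain ⟨u, hu, rfl⟩ := hU.2.2.symm ▸ hy.1
    obtain ⟨u', hu', huu⟩ := hU'.2.2.symm ▸ hy.2
    have : u' = u := hD.2.1 (hUD' ⟨hu', by rw [mem_preimage, huu]; exact hyb⟩) (hUD ⟨hu, hyb⟩) huu
    exact Set.disjoint_left.1 hd (hUN hu) (hUN' (this ▸ hu'))
  have hsurj : Metric.closedBall c r ⊆ f '' closure D := by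
    have haB : a ∈ f ⁻¹' Metric.closedBall c r := hEB a (subset_closure ha)
    rw [← h c r hr.le a haB]
    apply image_mono
    set C := connectedComponentIn (f ⁻¹' Metric.closedBall c r) a with hC
    have hCB : C ⊆ f ⁻¹' Metric.closedBall c r := connectedComponentIn_subset _ _
    have hCp : IsPreconnected C := isPreconnected_connectedComponentIn
    have haC : a ∈ C := mem_connectedComponentIn haB
    choose! ε hε U hUN hxU hU hUD hUE using fun x hx => key x hx univ univ_mem
    intro z hzC
    by_contra hz
    have hW : IsOpen (⋃ x ∈ closure D, U x) := isOpen_biUnion fun x hx => (hU x hx).1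
    obtain ⟨w, hwC, hwW, hwD⟩ := hCp _ (closure D)ᶜ hW isClosed_closure.isOpen_compl
      (by
        intro w hw
        by_cases hwD : w ∈ closure D
        · exact Or.inl (mem_biUnion hwD (hxU w hwD))
        · exact Or.inr hwD)
      ⟨a, haC, mem_biUnion (subset_closure ha) (hxU a (subset_closure ha))⟩ ⟨z, hzC, hz⟩
    obtain ⟨x, hx, hwx⟩ := mem_iUnion₂.1 hwW
    exact hwD (hUE x hx ⟨hwx, hCB hwC⟩)
  have hcomp : IsCompact (closure D) := by
    rw [isCompact_iff_ultrafilter_le_nhds]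
    intro F hF
    have hF' : closure D ∈ F := le_principal_iff.1 hF
    have hmap : ((F.map f : Ultrafilter E) : Filter E) ≤ 𝓟 (Metric.closedBall c r) := by
      rw [le_principal_iff]
      change f ⁻¹' Metric.closedBall c r ∈ F
      exact mem_of_superset hF' hEB
    obtain ⟨y, hy, hyF⟩ := isCompact_iff_ultrafilter_le_nhds.1
      (isCompact_closedBall c r) (F.map f) hmap
    obtain ⟨x, hx, rfl⟩ := hsurj hy
    refine ⟨x, hx, fun N hN => ?_⟩
    obtain ⟨ε, hε, U, hUN, hxU, hU, -, hUE⟩ := key x hx N hN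
    have hb : f ⁻¹' Metric.ball (f x) ε ∈ F := hyF (Metric.ball_mem_nhds _ hε)
    refine mem_of_superset (inter_mem hF' hb) ?_
    rintro z ⟨hzD, hzb⟩
    rw [mem_preimage, ← hU.2.2] at hzb
    obtain ⟨u, hu, huz⟩ := hzb
    have hue : u ∈ closure D := hUE ⟨hu, by rw [mem_preimage, huz]; exact hEB z hzD⟩
    exact hUN (hinj hue hzD huz ▸ hu)
  obtain ⟨t, ht, htinj⟩ := hinj.exists_mem_nhdsSet hcomp (fun x _ => hc.continuousAt) (by
    intro x _
    obtain ⟨ε, hε, U, -, hxU, hU⟩ := exists_small_sheet hf x univ_mem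
    exact ⟨U, hU.1.mem_nhds hxU, hU.2.1⟩)
  obtain ⟨O, hO, hDO, hOt⟩ := mem_nhdsSet_iff_exists.1 ht
  obtain ⟨δ, hδ, hsub⟩ := (isCompact_closedBall c r).exists_thickening_subset_open (ho O hO)
    (hsurj.trans (image_mono hDO))
  rw [thickening_closedBall hδ hr.le] at hsub
  have hs : IsSheet f O (f '' O) := ⟨hO, htinj.mono hOt, rfl⟩
  refine ⟨δ + r, by linarith, O ∩ f ⁻¹' Metric.ball c (δ + r), ⟨hDO (subset_closure ha), ?_⟩,
    hs.inter_preimage hc Metric.isOpen_ball hsub⟩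
  exact Metric.ball_subset_ball (by linarith) (hDB a ha)

theorem exists_sheet (hf : IsLocalHomeomorph f)
    (h : ∀ (c : E) (r : ℝ), 0 ≤ r →
      ∀ a ∈ f ⁻¹' Metric.closedBall c r,
        f '' connectedComponentIn (f ⁻¹' Metric.closedBall c r) a = Metric.closedBall c r)
    (a : A) {r : ℝ} (hr : 0 < r) :
    ∃ D, a ∈ D ∧ IsSheet f D (Metric.ball (f a) r) := by
  have hc := hf.continuous
  have ho := hf.isOpenMap
  let S : Set ℝ := {r | 0 < r ∧ ∃ D, a ∈ D ∧ IsSheet f D (Metric.ball (f a) r)}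
  have hdown : ∀ s ∈ S, ∀ t, 0 < t → t ≤ s → t ∈ S := by
    rintro s ⟨hs, D, haD, hD⟩ t ht hts
    exact ⟨ht, D ∩ f ⁻¹' Metric.ball (f a) t, ⟨haD, Metric.mem_ball_self ht⟩,
      hD.inter_preimage hc Metric.isOpen_ball (Metric.ball_subset_ball hts)⟩
  by_contra hcon
  have hrS : r ∉ S := fun hh => hcon hh.2
  have hbdd : BddAbove S := ⟨r, fun s hs => by
    by_contra hlt
    exact hrS (hdown s hs r hr (not_le.1 hlt).le)⟩
  obtain ⟨ε, hε, U, -, haU, hU⟩ := exists_small_sheet hf a univ_mem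
  have hεS : ε ∈ S := ⟨hε, U, haU, hU⟩
  have hR : 0 < sSup S := hε.trans_le (le_csSup hbdd hεS)
  have hlt : ∀ t : ℝ, 0 < t ∧ t < sSup S → ∃ D, a ∈ D ∧ IsSheet f D (Metric.ball (f a) t) := by
    rintro t ⟨ht, htR⟩
    obtain ⟨s, hs, hts⟩ := exists_lt_of_lt_csSup ⟨ε, hεS⟩ htR
    exact (hdown s hs t ht hts.le).2
  choose! D haD hD using hlt
  have hmono : ∀ s t, 0 < s ∧ s < sSup S → 0 < t ∧ t < sSup S → s ≤ t → D s ⊆ D t := by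
    intro s t hs ht hst
    refine (hD t ht).subset hc ho
      ((hD s hs).isPreconnected ho (convex_ball _ _).isPreconnected) ?_ ⟨a, haD s hs, haD t ht⟩
    intro z hz
    exact Metric.ball_subset_ball hst ((hD s hs).2.2 ▸ mem_image_of_mem f hz)
  have hsheet : IsSheet f (⋃ t ∈ Ioo 0 (sSup S), D t) (Metric.ball (f a) (sSup S)) := by
    refine ⟨isOpen_biUnion fun t ht => (hD t ht).1, ?_, ?_⟩
    · intro x hx y hy hxy
      obtain ⟨s, hs, hxs⟩ := mem_iUnion₂.1 hx
      obtain ⟨t, ht, hyt⟩ := mem_iUnion₂.1 hy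
      rcases le_total s t with hst | hst
      · exact (hD t ht).2.1 (hmono s t hs ht hst hxs) hyt hxy
      · exact (hD s hs).2.1 hxs (hmono t s ht hs hst hyt) hxy
    · ext y
      constructor
      · rintro ⟨x, hx, rfl⟩
        obtain ⟨s, hs, hxs⟩ := mem_iUnion₂.1 hx
        exact Metric.ball_subset_ball hs.2.le ((hD s hs).2.2 ▸ mem_image_of_mem f hxs)
      · intro hy
        obtain ⟨t, ht1, ht2⟩ := exists_between (Metric.mem_ball.1 hy)
        have ht : 0 < t ∧ t < sSup S := ⟨dist_nonneg.trans_lt ht1, ht2⟩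
        have hyt : y ∈ Metric.ball (f a) t := ht1
        rw [← (hD t ht).2.2] at hyt
        obtain ⟨x, hx, rfl⟩ := hyt
        exact ⟨x, mem_biUnion ht hx, rfl⟩
  have hhalf : 0 < sSup S / 2 ∧ sSup S / 2 < sSup S := ⟨by linarith, by linarith⟩
  obtain ⟨r', hr', D', haD', hD'⟩ := hsheet.extend hf h hR (mem_biUnion hhalf (haD _ hhalf))
  exact absurd (le_csSup hbdd (show r' ∈ S from ⟨hR.trans hr', D', haD', hD'⟩)) (not_le.2 hr')

theorem isCoveringMap_of_closedBall (hf : IsLocalHomeomorph f)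
    (h : ∀ (c : E) (r : ℝ), 0 ≤ r →
      ∀ a ∈ f ⁻¹' Metric.closedBall c r,
        f '' connectedComponentIn (f ⁻¹' Metric.closedBall c r) a = Metric.closedBall c r) :
    IsCoveringMap f := by
  have hc := hf.continuous
  have ho := hf.isOpenMap
  intro x
  have hsh : ∀ e : f ⁻¹' {x}, ∃ D, e.1 ∈ D ∧ IsSheet f D (Metric.ball x 1) := by
    rintro ⟨e, rfl⟩
    exact exists_sheet hf h e one_pos
  choose U heU hU using hsh
  have hpre : ∀ e, IsPreconnected (U e) := fun e =>
    (hU e).isPreconnected ho (convex_ball _ _).isPreconnected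
  have hUV : ∀ e, U e ⊆ f ⁻¹' Metric.ball x 1 := fun e z hz =>
    (hU e).2.2 ▸ mem_image_of_mem f hz
  have hex : f ⁻¹' Metric.ball x 1 ⊆ ⋃ e, U e := by
    intro z hz
    obtain ⟨T, hzT, hT⟩ := exists_sheet hf h z two_pos
    have hT1 := hT.inter_preimage hc (W := Metric.ball x 1) Metric.isOpen_ball (by
      apply Metric.ball_subset_ball'
      have : dist (f z) x < 1 := hz
      rw [dist_comm]
      linarith)
    obtain ⟨b, hb, hbx⟩ : x ∈ f '' (T ∩ f ⁻¹' Metric.ball x 1) := by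
      rw [hT1.2.2]
      exact Metric.mem_ball_self one_pos
    exact mem_iUnion.2 ⟨⟨b, hbx⟩, (hU ⟨b, hbx⟩).subset hc ho
      (hT1.isPreconnected ho (convex_ball _ _).isPreconnected) inter_subset_right
      ⟨b, hb, heU ⟨b, hbx⟩⟩ ⟨hzT, hz⟩⟩
  have hdisc : DiscreteTopology (f ⁻¹' {x}) :=
    (IsDiscrete.of_openPartialHomeomorph f subset_rfl fun e _ => by
      obtain ⟨φ, hφ, hh⟩ := hf e
      exact ⟨φ, hφ, hh.symm⟩).1
  cases isEmpty_or_nonempty (f ⁻¹' {x}) with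
  | inl hemp =>
    refine .of_preimage_eq_empty _ (Metric.ball_mem_nhds x one_pos) ?_
    rw [← subset_empty_iff]
    refine hex.trans ?_
    simp
  | inr hne =>
    have : Nonempty A := ⟨(Classical.arbitrary (f ⁻¹' {x})).1⟩
    refine .of_trivialization (t := (Metric.isOpen_ball (x := x) (ε := 1)).trivializationDiscrete
      U _ (fun e W hW => ⟨fun hWo => (hWo.preimage hc).inter (hU e).1, fun hWo => ?_⟩)
      (fun e => (hU e).2.1) (fun e => (hU e).2.2.ge) ?_ hex) (Metric.mem_ball_self one_pos)
    · have := ho _ hWo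
      rwa [inter_comm, image_inter_preimage, (hU e).2.2, inter_eq_right.2 hW] at this
    · intro e e' hee
      rw [Function.onFun, Set.disjoint_left]
      intro z hz hz'
      have hsub := (hU e').subset hc ho (hpre e) (hUV e) ⟨z, hz, hz'⟩
      exact hee (Subtype.ext ((hU e').2.1 (hsub (heU e)) (heU e')
        ((show f e.1 = x from e.2).trans (show f e'.1 = x from e'.2).symm)))

end SheetProof

/-- a local homeomorphism onto `ℝⁿ` such that every connected component of
the preimage of any closed ball surjects onto that ball is a covering map. -/
theorem stmt12 (n : ℕ) (hn : 1 ≤ n) (A : Type*) [TopologicalSpace A] [T2Space A]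
    (f : A → EuclideanSpace ℝ (Fin n)) (hf : IsLocalHomeomorph f)
    (h : ∀ (c : EuclideanSpace ℝ (Fin n)) (r : ℝ), 0 ≤ r →
      ∀ a ∈ f ⁻¹' Metric.closedBall c r,
        f '' connectedComponentIn (f ⁻¹' Metric.closedBall c r) a = Metric.closedBall c r) :
    IsCoveringMap f := by
  exact isCoveringMap_of_closedBall hf h
end
end
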